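/- Let A^(1), …, A^(L) ∈ ℝ^{n×n×n} be symmetric third-order tensors and let f(Q) = Σ_{ℓ=1}^L Σ_{k=1}^n (W^(ℓ)(Q)_{kkk})², where W^(ℓ)(Q)_{pqr} = Σ_{a,b,c} A^(ℓ)_{abc} Q_{ap} Q_{bq} Q_{cr}. Then for any starting point Q₀ ∈ O(n), every Jacobi-G sequence {Q_k} for f converges to a single limit point Q* ∈ O(n), and Q* is a stationary point of f restricted to O(n), i.e. ProjGrad f(Q*) = 0. -/

import Mathlib

open Matrix BigOperators Filter

/-- Frobenius norm of a real matrix. -/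
noncomputable def frobR {n : ℕ} (A : Matrix (Fin n) (Fin n) ℝ) : ℝ :=
  Real.sqrt (∑ i, ∑ j, (A i j) ^ 2)

/-- `g` is the Euclidean gradient of `f : ℝ^{n×n} → ℝ`. -/
def IsGradR {n : ℕ} (f : Matrix (Fin n) (Fin n) ℝ → ℝ)
    (g : Matrix (Fin n) (Fin n) ℝ → Matrix (Fin n) (Fin n) ℝ) : Prop :=
  ∀ Q H, HasDerivAt (fun t : ℝ => f (Q + t • H)) (∑ i, ∑ j, g Q i j * H i j) 0

/-- Riemannian (projected) gradient on O(n): `Q (Λ - Λᵀ)/2` with `Λ = Qᵀ ∇f(Q)`. -/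
noncomputable def projGradR {n : ℕ}
    (g : Matrix (Fin n) (Fin n) ℝ → Matrix (Fin n) (Fin n) ℝ)
    (Q : Matrix (Fin n) (Fin n) ℝ) : Matrix (Fin n) (Fin n) ℝ :=
  Q * ((1 / 2 : ℝ) • (Qᵀ * g Q - (Qᵀ * g Q)ᵀ))

/-- Givens rotation `G(i,j,θ)`: identity except `G_{ii} = G_{jj} = cos θ`,
`G_{ij} = −sin θ`, `G_{ji} = sin θ`. -/
noncomputable def givensR (n : ℕ) (i j : Fin n) (θ : ℝ) : Matrix (Fin n) (Fin n) ℝ :=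
  fun a b =>
    if a = i ∧ b = i then Real.cos θ
    else if a = j ∧ b = j then Real.cos θ
    else if a = i ∧ b = j then -Real.sin θ
    else if a = j ∧ b = i then Real.sin θ
    else if a = b then 1 else 0

namespace JG

/-- piecewise linear bump -/
noncomputable def bumpFun (a b u v y : ℝ) : ℝ :=
  if y ≤ a then y else if y ≤ u then a + (y - a) * ((v - a) / (u - a))
    else if y ≤ b then b - (b - y) * ((b - v) / (b - u)) else y

lemma bumpFun_strictMono {a b u v : ℝ} (hu : a < u) (hu' : u < b) (hv : a < v) (hv' : v < b) :
    StrictMono (bumpFun a b u v) := by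
  have k1 : 0 < (v - a) / (u - a) := div_pos (by linarith) (by linarith)
  have k2 : 0 < (b - v) / (b - u) := div_pos (by linarith) (by linarith)
  have e1 : (u - a) * ((v - a) / (u - a)) = v - a := by field_simp [sub_ne_zero.2 hu.ne']
  have e2 : (b - u) * ((b - v) / (b - u)) = b - v := by field_simp [sub_ne_zero.2 hu'.ne']
  set c1 := (v - a) / (u - a) with hc1
  set c2 := (b - v) / (b - u) with hc2
  intro x y hxy
  unfold bumpFun
  rw [← hc1, ← hc2]
  split_ifs <;> nlinarith

lemma bumpFun_inv {a b u v : ℝ} (hu : a < u) (hu' : u < b) (hv : a < v) (hv' : v < b) (y : ℝ) :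
    bumpFun a b u v (bumpFun a b v u y) = y := by
  have k1 : 0 < (v - a) / (u - a) := div_pos (by linarith) (by linarith)
  have k2 : 0 < (b - v) / (b - u) := div_pos (by linarith) (by linarith)
  have k1' : 0 < (u - a) / (v - a) := div_pos (by linarith) (by linarith)
  have k2' : 0 < (b - u) / (b - v) := div_pos (by linarith) (by linarith)
  have e1 : (v - a) * ((u - a) / (v - a)) = u - a := by field_simp [sub_ne_zero.2 hv.ne']
  have e2 : (b - v) * ((b - u) / (b - v)) = b - u := by field_simp [sub_ne_zero.2 hv'.ne']
  have f1 : ((u - a) / (v - a)) * ((v - a) / (u - a)) = 1 := by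
    field_simp [sub_ne_zero.2 hv.ne', sub_ne_zero.2 hu.ne']
  have f2 : ((b - u) / (b - v)) * ((b - v) / (b - u)) = 1 := by
    field_simp [sub_ne_zero.2 hv'.ne', sub_ne_zero.2 hu'.ne']
  unfold bumpFun
  set c1 := (v - a) / (u - a) with hc1
  set c2 := (b - v) / (b - u) with hc2
  set d1 := (u - a) / (v - a) with hd1
  set d2 := (b - u) / (b - v) with hd2
  by_cases h1 : y ≤ a
  · simp [h1]
  by_cases h2 : y ≤ v
  · have g1 : ¬ (a + (y - a) * d1 ≤ a) := by
      have : 0 < (y - a) * d1 := mul_pos (by linarith) k1'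
      linarith
    have g2 : a + (y - a) * d1 ≤ u := by
      have : (y - a) * d1 ≤ (v - a) * d1 := by gcongr
      linarith
    simp only [h1, h2, g1, g2, if_true, if_false]
    linear_combination (y - a) * f1
  by_cases h3 : y ≤ b
  · have g1 : ¬ (b - (b - y) * d2 ≤ u) := by
      have : (b - y) * d2 < (b - v) * d2 := by
        apply mul_lt_mul_of_pos_right _ k2'; linarith
      linarith
    have g2 : b - (b - y) * d2 ≤ b := by
      have : 0 ≤ (b - y) * d2 := mul_nonneg (by linarith) k2'.le
      linarith
    have g0 : ¬ (b - (b - y) * d2 ≤ a) := by linarith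
    simp only [h1, h2, h3, g0, g1, g2, if_true, if_false]
    linear_combination (y - b) * f2
  · have h4 : ¬ y ≤ u := by linarith
    simp [h1, h2, h3, h4]

lemma exists_bump {a b u v : ℝ} (hu : a < u) (hu' : u < b) (hv : a < v) (hv' : v < b) :
    ∃ χ : ℝ ≃o ℝ, χ u = v ∧ ∀ y, ¬ (a < y ∧ y < b) → χ y = y := by
  refine ⟨StrictMono.orderIsoOfRightInverse _ (bumpFun_strictMono hu hu' hv hv')
    (bumpFun a b v u) (fun y => bumpFun_inv hu hu' hv hv' y), ?_, ?_⟩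
  · simp only [StrictMono.orderIsoOfRightInverse_apply]
    unfold bumpFun
    simp only [le_refl, if_true, not_le.2 hu, if_false]
    field_simp [sub_ne_zero.2 hu.ne']
    ring
  · intro y hy
    simp only [StrictMono.orderIsoOfRightInverse_apply]
    unfold bumpFun
    by_cases h1 : y ≤ a
    · simp [h1]
    · have h2 : b ≤ y := by
        by_contra h; exact hy ⟨not_le.1 h1, not_le.1 h⟩
      have h3 : ¬ y ≤ u := by linarith
      rcases eq_or_lt_of_le h2 with h | h
      · subst h; simp [h1, h3]
      · simp [h1, h3, not_le.2 h]

/-- sign transfer on one interval, increasing case -/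
lemma sign_transfer_mono {P P' : ℝ → ℝ} {ψ χ : ℝ ≃o ℝ} {a b : ℝ}
    (hP : Continuous P)
    (ha : SignType.sign (P a) = SignType.sign (P' (ψ a)))
    (hb : SignType.sign (P b) = SignType.sign (P' (ψ b)))
    (hm' : StrictMonoOn P' (Set.Icc (ψ a) (ψ b)))
    (hca : χ a = ψ a) (hcb : χ b = ψ b)
    (hroot : ∀ y, a < y → y < b → P y = 0 → P' (χ y) = 0) {y : ℝ} (hy : a < y) (hy' : y < b) :
    SignType.sign (P y) = SignType.sign (P' (χ y)) := by
  have mem : ∀ z, a ≤ z → z ≤ b → χ z ∈ Set.Icc (ψ a) (ψ b) := fun z h1 h2 =>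
    ⟨by rw [← hca]; exact χ.monotone h1, by rw [← hcb]; exact χ.monotone h2⟩
  rcases lt_trichotomy (P y) 0 with h | h | h
  · rw [sign_neg h]
    symm; rw [sign_eq_neg_one_iff]
    rcases le_or_gt (P b) 0 with hb0 | hb0
    · have : P' (ψ b) ≤ 0 := by
        by_contra hc
        rw [sign_pos (not_le.1 hc), sign_eq_one_iff] at hb; linarith
      have h2 := hm' (mem y hy.le hy'.le) (mem b (by linarith) le_rfl) (χ.strictMono hy')
      rw [hcb] at h2; linarith
    · obtain ⟨z, hz, hz0⟩ := intermediate_value_Ioo hy'.le hP.continuousOn ⟨h, hb0⟩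
      have h2 := hm' (mem y hy.le hy'.le) (mem z (by linarith [hz.1]) hz.2.le) (χ.strictMono hz.1)
      rw [hroot z (by linarith [hz.1]) hz.2 hz0] at h2; exact h2
  · rw [h, hroot y hy hy' h]
  · rw [sign_pos h]
    symm; rw [sign_eq_one_iff]
    rcases le_or_gt 0 (P a) with ha0 | ha0
    · have : 0 ≤ P' (ψ a) := by
        by_contra hc
        rw [sign_neg (not_le.1 hc), sign_eq_neg_one_iff] at ha; linarith
      have h2 := hm' (mem a le_rfl (by linarith)) (mem y hy.le hy'.le) (χ.strictMono hy)
      rw [hca] at h2; linarith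
    · obtain ⟨z, hz, hz0⟩ := intermediate_value_Ioo hy.le hP.continuousOn ⟨ha0, h⟩
      have h2 := hm' (mem z hz.1.le (by linarith [hz.2])) (mem y hy.le hy'.le) (χ.strictMono hz.2)
      rw [hroot z hz.1 (by linarith [hz.2]) hz0] at h2; exact h2

lemma root_transfer_mono {P P' : ℝ → ℝ} {ψ : ℝ ≃o ℝ} {a b : ℝ}
    (hP' : Continuous P')
    (ha : SignType.sign (P a) = SignType.sign (P' (ψ a)))
    (hb : SignType.sign (P b) = SignType.sign (P' (ψ b)))
    (hm : StrictMonoOn P (Set.Icc a b)) {y : ℝ} (hy : a < y) (hy' : y < b) (h0 : P y = 0) :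
    ∃ v, ψ a < v ∧ v < ψ b ∧ P' v = 0 := by
  have h1 : P a < 0 := by
    rw [← h0]; exact hm ⟨le_rfl, by linarith⟩ ⟨hy.le, hy'.le⟩ hy
  have h2 : 0 < P b := by
    rw [← h0]; exact hm ⟨hy.le, hy'.le⟩ ⟨by linarith, le_rfl⟩ hy'
  rw [sign_neg h1] at ha
  rw [sign_pos h2] at hb
  have h3 := sign_eq_neg_one_iff.1 ha.symm
  have h4 := sign_eq_one_iff.1 hb.symm
  obtain ⟨z, hz, hz0⟩ := intermediate_value_Ioo (ψ.monotone (hy.le.trans hy'.le))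
    hP'.continuousOn ⟨h3, h4⟩
  exact ⟨z, hz.1, hz.2, hz0⟩

/-- consecutive elements -/
lemma exists_consec (Z : Finset ℝ) {z0 z1 y : ℝ} (h0 : z0 ∈ Z) (h1 : z1 ∈ Z)
    (hy0 : z0 ≤ y) (hy1 : y ≤ z1) (hy : y ∉ Z) :
    ∃ a ∈ Z, ∃ b ∈ Z, a < y ∧ y < b ∧ ∀ z ∈ Z, ¬ (a < z ∧ z < b) := by
  have n0 : (Z.filter (· < y)).Nonempty :=
    ⟨z0, by simp [h0]; exact lt_of_le_of_ne hy0 (fun h => hy (h ▸ h0))⟩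
  have n1 : (Z.filter (y < ·)).Nonempty :=
    ⟨z1, by simp [h1]; exact lt_of_le_of_ne hy1 (fun h => hy (h ▸ h1))⟩
  have m0 := Finset.max'_mem _ n0
  have m1 := Finset.min'_mem _ n1
  rw [Finset.mem_filter] at m0 m1
  refine ⟨_, m0.1, _, m1.1, m0.2, m1.2, ?_⟩
  rintro z hz ⟨h1, h2⟩
  rcases lt_trichotomy z y with h | h | h
  · exact absurd (Finset.le_max' (Z.filter (· < y)) z (by simp [hz, h])) (not_le.2 h1)
  · exact hy (h ▸ hz)
  · exact absurd (Finset.min'_le (Z.filter (y < ·)) z (by simp [hz, h])) (not_le.2 h2)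

lemma iso_extend {P P' : ℝ → ℝ} (hP : Continuous P) (hP' : Continuous P') (ψ : ℝ ≃o ℝ)
    (Z : Finset ℝ) (hZ : ∀ z ∈ Z, SignType.sign (P z) = SignType.sign (P' (ψ z)))
    (hmono : ∀ a b, a < b → (∀ z ∈ Z, ¬ (a < z ∧ z < b)) →
      (StrictMonoOn P (Set.Icc a b) ∧ StrictMonoOn P' (Set.Icc (ψ a) (ψ b))) ∨
      (StrictAntiOn P (Set.Icc a b) ∧ StrictAntiOn P' (Set.Icc (ψ a) (ψ b))))
    {z0 z1 : ℝ} (h0 : z0 ∈ Z) (h1 : z1 ∈ Z)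
    (hz0 : ∀ y, y ≤ z0 → P y ≠ 0 ∧ ∀ w, w ≤ ψ z0 → SignType.sign (P y) = SignType.sign (P' w))
    (hz1 : ∀ y, z1 ≤ y → P y ≠ 0 ∧ ∀ w, ψ z1 ≤ w → SignType.sign (P y) = SignType.sign (P' w))
    (hfin : {y | P y = 0}.Finite) :
    ∃ χ : ℝ ≃o ℝ, (∀ z ∈ Z, χ z = ψ z) ∧
      ∀ y, SignType.sign (P y) = SignType.sign (P' (χ y)) := by
  -- roots outside Z
  have step : ∀ S : Finset ℝ, (∀ y ∈ S, P y = 0 ∧ y ∉ Z) →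
      ∃ χ : ℝ ≃o ℝ, (∀ z ∈ Z, χ z = ψ z) ∧ ∀ y ∈ S, P' (χ y) = 0 := by
    intro S
    induction S using Finset.induction_on with
    | empty => intro _; exact ⟨ψ, fun _ _ => rfl, by simp⟩
    | insert η S hη ih =>
      intro hS
      obtain ⟨χ, hχ, hχ'⟩ := ih (fun y hy => hS y (Finset.mem_insert_of_mem hy))
      obtain ⟨hη0, hηZ⟩ := hS η (Finset.mem_insert_self _ _)
      have b0 : z0 ≤ η := by
        by_contra h; exact (hz0 η (not_le.1 h).le).1 hη0
      have b1 : η ≤ z1 := by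
        by_contra h; exact (hz1 η (not_le.1 h).le).1 hη0
      obtain ⟨a, haZ, b, hbZ, hab, hbb, hno⟩ := exists_consec Z h0 h1 b0 b1 hηZ
      have hv : ∃ v, ψ a < v ∧ v < ψ b ∧ P' v = 0 := by
        rcases hmono a b (hab.trans hbb) hno with hm | hm
        · exact root_transfer_mono hP' (hZ a haZ) (hZ b hbZ) hm.1 hab hbb hη0
        · have := root_transfer_mono (P := fun y => - P y) (P' := fun y => - P' y) (ψ := ψ)
            hP'.neg (by simp only [Left.sign_neg, hZ a haZ]) (by simp only [Left.sign_neg, hZ b hbZ]) hm.1.neg hab hbb (by simp [hη0])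
          simpa using this
      obtain ⟨v, hav, hvb, hv0⟩ := hv
      have ca := hχ a haZ
      have cb := hχ b hbZ
      obtain ⟨β, hβ, hβ'⟩ := exists_bump (a := ψ a) (b := ψ b) (u := χ η) (v := v)
        (by rw [← ca]; exact χ.strictMono hab) (by rw [← cb]; exact χ.strictMono hbb) hav hvb
      refine ⟨χ.trans β, ?_, ?_⟩
      · intro z hz
        have : β (χ z) = χ z := by
          apply hβ'
          rw [← ca, ← cb]
          rintro ⟨g1, g2⟩
          exact hno z hz ⟨χ.lt_iff_lt.1 g1, χ.lt_iff_lt.1 g2⟩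
        show β (χ z) = ψ z
        rw [this, hχ z hz]
      · intro y hy
        rw [Finset.mem_insert] at hy
        rcases hy with rfl | hy
        · simp [hβ, hv0]
        · have : β (χ y) = χ y := by
            apply hβ'
            rw [← ca, ← cb]
            rintro ⟨g1, g2⟩
            have g1 := χ.lt_iff_lt.1 g1
            have g2 := χ.lt_iff_lt.1 g2
            have hy0 := (hS y (Finset.mem_insert_of_mem hy)).1
            have : y = η := by
              rcases hmono a b (hab.trans hbb) hno with hm | hm
              · exact hm.1.injOn ⟨g1.le, g2.le⟩ ⟨hab.le, hbb.le⟩ (hy0.trans hη0.symm)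
              · exact hm.1.injOn ⟨g1.le, g2.le⟩ ⟨hab.le, hbb.le⟩ (hy0.trans hη0.symm)
            exact hη (this ▸ hy)
          simp [this, hχ' y hy]
  classical
  obtain ⟨χ, hχ, hχ'⟩ := step (hfin.toFinset.filter (· ∉ Z)) (by intro y hy; simpa using hy)
  have hχ' : ∀ y, P y = 0 → y ∉ Z → P' (χ y) = 0 := fun y h1 h2 => hχ' y (by simp [h1, h2])
  refine ⟨χ, hχ, fun y => ?_⟩
  by_cases hyZ : y ∈ Z
  · rw [hχ y hyZ]; exact hZ y hyZ
  rcases lt_or_ge y z0 with h | b0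
  · exact (hz0 y h.le).2 _ (by rw [← hχ z0 h0]; exact χ.monotone h.le)
  rcases lt_or_ge z1 y with h | b1
  · exact (hz1 y h.le).2 _ (by rw [← hχ z1 h1]; exact χ.monotone h.le)
  obtain ⟨a, haZ, b, hbZ, hab, hbb, hno⟩ := exists_consec Z h0 h1 b0 b1 hyZ
  have hr : ∀ y, a < y → y < b → P y = 0 → P' (χ y) = 0 := fun y h1 h2 h3 =>
    hχ' y h3 (fun h => hno y h ⟨h1, h2⟩)
  rcases hmono a b (hab.trans hbb) hno with hm | hm
  · exact sign_transfer_mono hP (hZ a haZ) (hZ b hbZ) hm.2 (hχ a haZ) (hχ b hbZ) hr hab hbb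
  · have := sign_transfer_mono (P := fun y => - P y) (P' := fun y => - P' y) (ψ := ψ) (χ := χ)
      hP.neg (by simp only [Left.sign_neg, hZ a haZ]) (by simp only [Left.sign_neg, hZ b hbZ]) hm.2.neg (hχ a haZ) (hχ b hbZ)
      (by simpa using hr) hab hbb
    simpa [Left.sign_neg] using this

/-- an isomorphism agreeing on the roots preserves signs -/
lemma sign_of_agree {q q' : ℝ → ℝ} (hq' : Continuous q') {ψ χ : ℝ ≃o ℝ}
    (h : ∀ y, SignType.sign (q y) = SignType.sign (q' (ψ y)))
    (hag : ∀ z, q z = 0 → χ z = ψ z) (y : ℝ) :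
    SignType.sign (q y) = SignType.sign (q' (χ y)) := by
  rw [h y]
  by_cases h0 : q' (ψ y) = 0
  · have : q y = 0 := by have := h y; rw [h0, sign_zero] at this; exact sign_eq_zero_iff.1 this
    rw [hag y this]
  have key : ∀ w, w ∈ Set.uIcc (ψ y) (χ y) → q' w ≠ 0 := by
    intro w hw hw0
    obtain ⟨z, rfl⟩ := ψ.surjective w
    have hz : q z = 0 := by have := h z; rw [hw0, sign_zero] at this; exact sign_eq_zero_iff.1 this
    have hz' := hag z hz
    have : z = y := by
      rcases Set.mem_uIcc.1 hw with ⟨g1, g2⟩ | ⟨g1, g2⟩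
      · rw [← hz'] at g2
        exact le_antisymm (χ.le_iff_le.1 g2) (ψ.le_iff_le.1 g1)
      · rw [← hz'] at g1
        exact le_antisymm (ψ.le_iff_le.1 g2) (χ.le_iff_le.1 g1)
    exact h0 (this ▸ hw0)
  have hpre : IsPreconnected (Set.uIcc (ψ y) (χ y)) := isPreconnected_uIcc
  rcases lt_or_gt_of_ne h0 with hlt | hgt
  · rw [sign_neg hlt]
    rcases lt_trichotomy (q' (χ y)) 0 with h2 | h2 | h2
    · rw [sign_neg h2]
    · exact absurd h2 (key _ Set.right_mem_uIcc)
    · obtain ⟨w, hw, hw0⟩ := hpre.intermediate_value Set.left_mem_uIcc Set.right_mem_uIcc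
        hq'.continuousOn ⟨hlt.le, h2.le⟩
      exact absurd hw0 (key w hw)
  · rw [sign_pos hgt]
    rcases lt_trichotomy (q' (χ y)) 0 with h2 | h2 | h2
    · obtain ⟨w, hw, hw0⟩ := hpre.intermediate_value Set.right_mem_uIcc Set.left_mem_uIcc
        hq'.continuousOn ⟨h2.le, hgt.le⟩
      exact absurd hw0 (key w hw)
    · exact absurd h2 (key _ Set.right_mem_uIcc)
    · rw [sign_pos h2]

end JG

namespace JG
open Polynomial in
lemma pseudo_div {R : Type*} [CommRing R] (q : R[X]) (hq : 0 < q.natDegree) (N : ℕ) :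
    ∀ p : R[X], p.natDegree < N → ∃ (k : ℕ) (u r : R[X]),
      C (q.leadingCoeff ^ (2 * k)) * p = u * q + r ∧ r.natDegree < q.natDegree := by
  induction N with
  | zero => intro p hp; omega
  | succ N ih =>
    intro p hp
    by_cases hlt : p.natDegree < q.natDegree
    · exact ⟨0, 0, p, by simp, hlt⟩
    have hle := not_lt.1 hlt
    set c := q.leadingCoeff with hc
    set m := p.natDegree - q.natDegree with hm
    set p2 := C (c ^ 2) * p - C (c * p.leadingCoeff) * (X ^ m * q) with hp2
    have hdeg : p2.natDegree ≤ p.natDegree := by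
      apply (natDegree_sub_le _ _).trans
      apply max_le
      · exact natDegree_C_mul_le _ _
      · apply (natDegree_C_mul_le _ _).trans
        apply natDegree_mul_le.trans
        have := natDegree_X_pow_le (R := R) m
        omega
    have hco : p2.coeff p.natDegree = 0 := by
      have e : p.natDegree = q.natDegree + m := by omega
      have h1 : (X ^ m * q).coeff p.natDegree = c := by
        rw [e, coeff_X_pow_mul]; rfl
      rw [hp2, coeff_sub, coeff_C_mul, coeff_C_mul, h1]
      simp only [leadingCoeff]; ring
    have hlt2 : p2.natDegree < p.natDegree := by
      rcases lt_or_eq_of_le hdeg with h | h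
      · exact h
      · rw [← h] at hco
        have : p2 = 0 := leadingCoeff_eq_zero.1 hco
        rw [this, natDegree_zero] at h
        omega
    obtain ⟨k, u, r, hk, hr⟩ := ih p2 (by omega)
    refine ⟨k + 1, u + C (c ^ (2 * k)) * C (c * p.leadingCoeff) * X ^ m, r, ?_, hr⟩
    have : C (c ^ (2 * (k + 1))) * p = C (c ^ (2 * k)) * (C (c ^ 2) * p) := by
      rw [← mul_assoc, ← C_mul]; ring_nf
    rw [this, ← sub_add_cancel (C (c ^ 2) * p) (C (c * p.leadingCoeff) * (X ^ m * q)), ← hp2,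
      mul_add, hk]
    ring

open Polynomial in
lemma poly_tail (P : ℝ[X]) (hd : 0 < P.natDegree) : ∃ M : ℝ, ∀ y, M ≤ y →
    SignType.sign (P.eval y) = SignType.sign P.leadingCoeff := by
  have hd' : 0 < P.degree := natDegree_pos_iff_degree_pos.1 hd
  have hP : P ≠ 0 := by rintro rfl; simp at hd
  rcases lt_or_gt_of_ne (leadingCoeff_ne_zero.2 hP) with h | h
  · have := P.tendsto_atBot_of_leadingCoeff_nonpos hd' h.le
    obtain ⟨M, hM⟩ := (this.eventually (eventually_lt_atBot 0)).exists_forall_of_atTop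
    exact ⟨M, fun y hy => by rw [sign_neg (hM y hy), sign_neg h]⟩
  · have := P.tendsto_atTop_of_leadingCoeff_nonneg hd' h.le
    obtain ⟨M, hM⟩ := (this.eventually (eventually_gt_atTop 0)).exists_forall_of_atTop
    exact ⟨M, fun y hy => by rw [sign_pos (hM y hy), sign_pos h]⟩

open Polynomial in
lemma poly_tail' (P : ℝ[X]) (hd : 0 < P.natDegree) : ∃ M : ℝ, ∀ y, y ≤ M →
    SignType.sign (P.eval y) = SignType.sign ((-1) ^ P.natDegree * P.leadingCoeff) := by
  have hn : (P.comp (-X)).natDegree = P.natDegree := by simp [natDegree_comp]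
  obtain ⟨M, hM⟩ := poly_tail (P.comp (-X)) (by rwa [hn])
  refine ⟨-M, fun y hy => ?_⟩
  have := hM (-y) (by linarith)
  rw [eval_comp, leadingCoeff_comp (by simp)] at this
  simpa [mul_comm] using this

open Polynomial in
lemma deriv_mono (P : ℝ[X]) {a b : ℝ} (h : ∀ y, a < y → y < b → 0 < P.derivative.eval y) :
    StrictMonoOn (fun y => P.eval y) (Set.Icc a b) := by
  apply strictMonoOn_of_deriv_pos (convex_Icc a b) P.continuous.continuousOn
  intro x hx
  rw [interior_Icc] at hx
  rw [Polynomial.deriv]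
  exact h x hx.1 hx.2

open Polynomial in
lemma deriv_anti (P : ℝ[X]) {a b : ℝ} (h : ∀ y, a < y → y < b → P.derivative.eval y < 0) :
    StrictAntiOn (fun y => P.eval y) (Set.Icc a b) := by
  apply strictAntiOn_of_deriv_neg (convex_Icc a b) P.continuous.continuousOn
  intro x hx
  rw [interior_Icc] at hx
  rw [Polynomial.deriv]
  exact h x hx.1 hx.2

/-- constant sign on an open interval without zeros -/
lemma sign_const {D : ℝ → ℝ} (hD : Continuous D) {a b : ℝ}
    (h : ∀ y, a < y → y < b → D y ≠ 0) :
    (∀ y, a < y → y < b → 0 < D y) ∨ (∀ y, a < y → y < b → D y < 0) := by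
  by_contra hcon
  push Not at hcon
  obtain ⟨⟨y, hy1, hy2, hy⟩, ⟨z, hz1, hz2, hz⟩⟩ := hcon
  obtain ⟨w, hw, hw0⟩ := (isPreconnected_Ioo (a := a) (b := b)).intermediate_value
    ⟨hy1, hy2⟩ ⟨hz1, hz2⟩ hD.continuousOn ⟨hy, hz⟩
  exact h w hw.1 hw.2 hw0

open Polynomial in
lemma tarski_step {R : Type*} [CommRing R] (φ φ' : R →+* ℝ) (p : R[X]) (hd : 0 < p.natDegree)
    (hlc : φ p.leadingCoeff ≠ 0)
    (hlcs : SignType.sign (φ p.leadingCoeff) = SignType.sign (φ' p.leadingCoeff))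
    (G : Multiset R[X]) (hG : ∀ q ∈ G, q.map φ ≠ 0) (hder : derivative p ∈ G) (ψ : ℝ ≃o ℝ)
    (hψ : ∀ q ∈ G, ∀ y, SignType.sign (eval₂ φ y q) = SignType.sign (eval₂ φ' (ψ y) q))
    (hrem : ∀ q ∈ G, ∀ y, eval₂ φ y q = 0 →
      SignType.sign (eval₂ φ y p) = SignType.sign (eval₂ φ' (ψ y) p)) :
    ∃ χ : ℝ ≃o ℝ, (∀ q ∈ G, ∀ y, SignType.sign (eval₂ φ y q) = SignType.sign (eval₂ φ' (χ y) q)) ∧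
      ∀ y, SignType.sign (eval₂ φ y p) = SignType.sign (eval₂ φ' (χ y) p) := by
  classical
  simp only [← eval_map] at *
  have hlc' : φ' p.leadingCoeff ≠ 0 := by
    intro h; rw [h, sign_zero] at hlcs; exact hlc (sign_eq_zero_iff.1 hlcs)
  have e1 : (p.map φ).natDegree = p.natDegree := natDegree_map_of_leadingCoeff_ne_zero _ hlc
  have e2 : (p.map φ').natDegree = p.natDegree := natDegree_map_of_leadingCoeff_ne_zero _ hlc'
  have l1 : (p.map φ).leadingCoeff = φ p.leadingCoeff := leadingCoeff_map_of_leadingCoeff_ne_zero _ hlc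
  have l2 : (p.map φ').leadingCoeff = φ' p.leadingCoeff :=
    leadingCoeff_map_of_leadingCoeff_ne_zero _ hlc'
  obtain ⟨M1, hM1⟩ := poly_tail (p.map φ) (by rwa [e1])
  obtain ⟨M2, hM2⟩ := poly_tail (p.map φ') (by rwa [e2])
  obtain ⟨M3, hM3⟩ := poly_tail' (p.map φ) (by rwa [e1])
  obtain ⟨M4, hM4⟩ := poly_tail' (p.map φ') (by rwa [e2])
  set z1 := max M1 (ψ.symm M2) with hz1
  set z0 := min M3 (ψ.symm M4) with hz0
  set Z : Finset ℝ := (G.toFinset.biUnion fun q => (q.map φ).roots.toFinset) ∪ {z0, z1} with hZ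
  have memZ : ∀ q ∈ G, ∀ z, (q.map φ).eval z = 0 → z ∈ Z := by
    intro q hq z hz
    rw [hZ, Finset.mem_union]; left
    rw [Finset.mem_biUnion]
    exact ⟨q, by simpa using hq, by simp [hG q hq, hz]⟩
  have hpne : p.map φ ≠ 0 := by intro h; rw [h] at e1; simp at e1; omega
  have t1 : ∀ y, z1 ≤ y → (p.map φ).eval y ≠ 0 ∧ ∀ w, ψ z1 ≤ w →
      SignType.sign ((p.map φ).eval y) = SignType.sign ((p.map φ').eval w) := by
    intro y hy
    have h1 := hM1 y (le_trans (le_max_left _ _) hy)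
    constructor
    · intro h
      rw [h, sign_zero, l1] at h1
      exact hlc (sign_eq_zero_iff.1 h1.symm)
    · intro w hw
      rw [h1, hM2 w, l1, l2, hlcs]
      refine le_trans ?_ hw
      rw [← ψ.symm_apply_le]; exact le_max_right _ _
  have t0 : ∀ y, y ≤ z0 → (p.map φ).eval y ≠ 0 ∧ ∀ w, w ≤ ψ z0 →
      SignType.sign ((p.map φ).eval y) = SignType.sign ((p.map φ').eval w) := by
    intro y hy
    have h1 := hM3 y (le_trans hy (min_le_left _ _))
    constructor
    · intro h
      rw [h, sign_zero, l1] at h1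
      have := sign_eq_zero_iff.1 h1.symm
      rcases mul_eq_zero.1 this with h2 | h2
      · exact absurd h2 (pow_ne_zero _ (by norm_num))
      · exact hlc h2
    · intro w hw
      rw [h1, hM4 w, l1, l2, e1, e2, sign_mul, sign_mul, hlcs]
      refine le_trans hw ?_
      rw [← ψ.le_symm_apply]; exact min_le_right _ _
  have main := iso_extend (P := fun y => (p.map φ).eval y) (P' := fun y => (p.map φ').eval y)
    (p.map φ).continuous (p.map φ').continuous ψ Z ?_ ?_ (z0 := z0) (z1 := z1)
    (by simp [hZ]) (by simp [hZ]) t0 t1 ?_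
  · obtain ⟨χ, h1, h2⟩ := main
    refine ⟨χ, fun q hq y => ?_, h2⟩
    exact sign_of_agree (q := fun y => (q.map φ).eval y) (q' := fun y => (q.map φ').eval y)
      (q.map φ').continuous (hψ q hq) (fun z hz => h1 z (memZ q hq z hz)) y
  · intro z hz
    rw [hZ, Finset.mem_union, Finset.mem_biUnion] at hz
    rcases hz with ⟨q, hq, hqz⟩ | hz
    · simp only [Multiset.mem_toFinset] at hq hqz
      exact hrem q hq z (isRoot_of_mem_roots hqz)
    · simp only [Finset.mem_insert, Finset.mem_singleton] at hz
      rcases hz with rfl | rfl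
      · exact (t0 _ le_rfl).2 _ le_rfl
      · exact (t1 _ le_rfl).2 _ le_rfl
  · intro a b hab hno
    have hd0 : ∀ y, a < y → y < b → ((derivative p).map φ).eval y ≠ 0 := fun y h1 h2 h3 =>
      hno y (memZ _ hder y h3) ⟨h1, h2⟩
    have hsg := hψ _ hder
    rcases sign_const ((derivative p).map φ).continuous hd0 with h | h
    · left
      refine ⟨deriv_mono _ (by rw [derivative_map]; exact h), deriv_mono _ ?_⟩
      rw [derivative_map]
      intro w h1 h2
      obtain ⟨y, rfl⟩ := ψ.surjective w
      have := hsg y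
      rw [sign_pos (h y (ψ.lt_iff_lt.1 h1) (ψ.lt_iff_lt.1 h2))] at this
      exact sign_eq_one_iff.1 this.symm
    · right
      refine ⟨deriv_anti _ (by rw [derivative_map]; exact h), deriv_anti _ ?_⟩
      rw [derivative_map]
      intro w h1 h2
      obtain ⟨y, rfl⟩ := ψ.surjective w
      have := hsg y
      rw [sign_neg (h y (ψ.lt_iff_lt.1 h1) (ψ.lt_iff_lt.1 h2))] at this
      exact sign_eq_neg_one_iff.1 this.symm
  · exact (p.map φ).finite_setOfPred_isRoot hpne

open Polynomial in
theorem tarski_iso {R : Type*} [CommRing R] (F : Multiset R[X]) :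
    ∃ T : Set R, T.Finite ∧ ∀ φ φ' : R →+* ℝ,
      (∀ r ∈ T, SignType.sign (φ r) = SignType.sign (φ' r)) → ∃ ψ : ℝ ≃o ℝ,
        ∀ p ∈ F, ∀ y, SignType.sign (eval₂ φ y p) = SignType.sign (eval₂ φ' (ψ y) p) := by
  classical
  induction F using (InvImage.wf (fun F : Multiset R[X] => F.map natDegree)
    (Multiset.wellFounded_isDershowitzMannaLT (α := ℕ))).induction with
  | _ F ih =>
  replace ih : ∀ H X Y Z : Multiset R[X], Z ≠ 0 → H = X + Y → F = X + Z →
      (∀ y ∈ Y, ∃ z ∈ Z, y.natDegree < z.natDegree) →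
      ∃ T : Set R, T.Finite ∧ ∀ φ φ' : R →+* ℝ,
      (∀ r ∈ T, SignType.sign (φ r) = SignType.sign (φ' r)) → ∃ ψ : ℝ ≃o ℝ,
        ∀ p ∈ H, ∀ y, SignType.sign (eval₂ φ y p) = SignType.sign (eval₂ φ' (ψ y) p) := by
    intro H X Y Z hZ hH hF hlt
    apply ih
    refine ⟨X.map natDegree, Y.map natDegree, Z.map natDegree, ?_, ?_, ?_, ?_⟩
    · simpa using hZ
    · simp [hH]
    · simp [hF]
    · intro y hy
      obtain ⟨q, hq, rfl⟩ := Multiset.mem_map.1 hy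
      obtain ⟨z, hz, hz'⟩ := hlt q hq
      exact ⟨_, Multiset.mem_map_of_mem _ hz, hz'⟩
  -- constant polynomials
  by_cases hconst : ∃ p ∈ F, natDegree p = 0
  · obtain ⟨p, hp, hp0⟩ := hconst
    obtain ⟨T, hT, hT'⟩ := ih (F.erase p) (F.erase p) 0 {p} (by simp) (by simp)
      (by rw [add_comm]; exact (Multiset.cons_erase hp).symm) (by simp)
    refine ⟨insert (p.coeff 0) T, hT.insert _, fun φ φ' h => ?_⟩
    obtain ⟨ψ, hψ⟩ := hT' φ φ' (fun r hr => h r (Set.mem_insert_of_mem _ hr))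
    refine ⟨ψ, fun q hq y => ?_⟩
    rw [← Multiset.cons_erase hp, Multiset.mem_cons] at hq
    rcases hq with rfl | hq
    · rw [eq_C_of_natDegree_eq_zero hp0, eval₂_C, eval₂_C]
      exact h _ (Set.mem_insert _ _)
    · exact hψ q hq y
  push Not at hconst
  by_cases hF : F = 0
  · subst hF
    exact ⟨∅, Set.finite_empty, fun _ _ _ => ⟨OrderIso.refl ℝ, by simp⟩⟩
  -- top degree polynomial
  obtain ⟨p, hpF, hpmax⟩ : ∃ p ∈ F, ∀ q ∈ F, natDegree q ≤ natDegree p := by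
    have hne : F.toFinset.Nonempty := by
      obtain ⟨a, ha⟩ := Multiset.exists_mem_of_ne_zero hF
      exact ⟨a, by simpa using ha⟩
    obtain ⟨p, hp, h⟩ := F.toFinset.exists_max_image natDegree hne
    exact ⟨p, by simpa using hp, fun q hq => h q (by simpa using hq)⟩
  have hd : 0 < p.natDegree := Nat.pos_of_ne_zero (hconst p hpF)
  -- erased families
  have herase : ∀ q : R[X], ∃ T : Set R, T.Finite ∧ (q ∈ F → ∀ φ φ' : R →+* ℝ,
      (∀ r ∈ T, SignType.sign (φ r) = SignType.sign (φ' r)) → ∃ ψ : ℝ ≃o ℝ,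
        ∀ p ∈ q.eraseLead ::ₘ F.erase q, ∀ y,
          SignType.sign (eval₂ φ y p) = SignType.sign (eval₂ φ' (ψ y) p)) := by
    intro q
    by_cases hq : q ∈ F
    · obtain ⟨T, hT, hT'⟩ := ih (q.eraseLead ::ₘ F.erase q) (F.erase q) {q.eraseLead} {q} (by simp)
        (by rw [add_comm]; rfl) (by rw [add_comm]; exact (Multiset.cons_erase hq).symm) (by
          simp only [Multiset.mem_singleton, forall_eq, exists_eq_left]
          have := eraseLead_natDegree_le q
          have := hconst q hq
          omega)
      exact ⟨T, hT, fun _ => hT'⟩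
    · exact ⟨∅, Set.finite_empty, fun h => absurd h hq⟩
  choose TE hTE hTE' using herase
  -- remainders
  have hremE : ∀ q : R[X], ∃ r : R[X], 0 < q.natDegree → r.natDegree < q.natDegree ∧
      ∃ (k : ℕ) (u : R[X]), C (q.leadingCoeff ^ (2 * k)) * p = u * q + r := by
    intro q
    by_cases hq : 0 < q.natDegree
    · obtain ⟨k, u, r, h1, h2⟩ := pseudo_div q hq _ p (Nat.lt_succ_self _)
      exact ⟨r, fun _ => ⟨h2, k, u, h1⟩⟩
    · exact ⟨0, fun h => absurd h hq⟩
  choose rem hrem using hremE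
  set G : Multiset R[X] := F.erase p + {derivative p} with hGdef
  set D : Multiset R[X] := (G.filter (fun q => 0 < q.natDegree)).map rem with hDdef
  have hder : (derivative p).natDegree < p.natDegree := natDegree_derivative_lt hd.ne'
  have hGdeg : ∀ q ∈ G, q.natDegree ≤ p.natDegree := by
    intro q hq
    rw [hGdef, Multiset.mem_add] at hq
    rcases hq with hq | hq
    · exact hpmax q (Multiset.mem_of_mem_erase hq)
    · rw [Multiset.mem_singleton] at hq; subst hq; exact hder.le
  obtain ⟨TH, hTH, hTH'⟩ := ih (G + D) (F.erase p) ({derivative p} + D) {p} (by simp)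
    (by rw [hGdef, add_assoc]) (by rw [add_comm]; exact (Multiset.cons_erase hpF).symm) (by
      intro q hq
      refine ⟨p, by simp, ?_⟩
      rw [Multiset.mem_add] at hq
      rcases hq with hq | hq
      · rw [Multiset.mem_singleton] at hq; subst hq; exact hder
      · obtain ⟨s, hs, rfl⟩ := Multiset.mem_map.1 hq
        rw [Multiset.mem_filter] at hs
        exact lt_of_lt_of_le (hrem s hs.2).1 (hGdeg s hs.1))
  refine ⟨TH ∪ (⋃ q ∈ F.toFinset, TE q) ∪ (leadingCoeff '' (F.toFinset : Set R[X])), ?_, ?_⟩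
  · refine (hTH.union ?_).union ?_
    · exact Set.Finite.biUnion (Finset.finite_toSet _) (fun q _ => hTE q)
    · exact (Finset.finite_toSet _).image _
  intro φ φ' h
  by_cases hz : ∃ q ∈ F, φ q.leadingCoeff = 0
  · obtain ⟨q, hq, hq0⟩ := hz
    have hq0' : φ' q.leadingCoeff = 0 := by
      have := h q.leadingCoeff (Or.inr ⟨q, by simpa using hq, rfl⟩)
      rw [hq0, sign_zero] at this
      exact sign_eq_zero_iff.1 this.symm
    obtain ⟨ψ, hψ⟩ := hTE' q hq φ φ' (fun r hr => h r (Or.inl (Or.inr (by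
      simp only [Set.mem_iUnion]; exact ⟨q, by simpa using hq, hr⟩))))
    refine ⟨ψ, fun s hs y => ?_⟩
    rw [← Multiset.cons_erase hq, Multiset.mem_cons] at hs
    rcases hs with rfl | hs
    · have := hψ s.eraseLead (Multiset.mem_cons_self _ _) y
      have ev : ∀ (f : R →+* ℝ) (w : ℝ), f s.leadingCoeff = 0 →
          eval₂ f w s = eval₂ f w s.eraseLead := by
        intro f w hf
        conv_lhs => rw [← s.eraseLead_add_C_mul_X_pow]
        rw [eval₂_add, eval₂_mul, eval₂_C, hf, zero_mul, add_zero]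
      rw [ev φ y hq0, ev φ' _ hq0', this]
    · exact hψ s (Multiset.mem_cons_of_mem hs) y
  push Not at hz
  obtain ⟨ψ, hψ⟩ := hTH' φ φ' (fun r hr => h r (Or.inl (Or.inl hr)))
  have hlcs : ∀ q ∈ F, SignType.sign (φ q.leadingCoeff) = SignType.sign (φ' q.leadingCoeff) :=
    fun q hq => h _ (Or.inr ⟨q, by simpa using hq, rfl⟩)
  have hz' : ∀ q ∈ F, φ' q.leadingCoeff ≠ 0 := by
    intro q hq h0
    have := hlcs q hq
    rw [h0, sign_zero] at this
    exact hz q hq (sign_eq_zero_iff.1 this)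
  have hdlc : (derivative p).coeff (p.natDegree - 1) = p.leadingCoeff * p.natDegree := by
    rw [coeff_derivative, show p.natDegree - 1 + 1 = p.natDegree by omega]
    have : ((p.natDegree - 1 : ℕ) : R) + 1 = p.natDegree := by
      rw [Nat.cast_sub (by omega)]; simp
    rw [this]; rfl
  have hGlc : ∀ f : R →+* ℝ, (∀ q ∈ F, f q.leadingCoeff ≠ 0) → ∀ q ∈ G, f q.leadingCoeff ≠ 0 := by
    intro f hf q hq
    rw [hGdef, Multiset.mem_add] at hq
    rcases hq with hq | hq
    · exact hf q (Multiset.mem_of_mem_erase hq)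
    · rw [Multiset.mem_singleton] at hq; subst hq
      have hne : f ((derivative p).coeff (p.natDegree - 1)) ≠ 0 := by
        rw [hdlc, map_mul, map_natCast]
        exact mul_ne_zero (hf p hpF) (by exact_mod_cast hd.ne')
      have hcne : (derivative p).coeff (p.natDegree - 1) ≠ 0 := by
        intro h0; rw [h0, map_zero] at hne; exact hne rfl
      have := le_natDegree_of_ne_zero hcne
      have hdeq : (derivative p).natDegree = p.natDegree - 1 := by omega
      rw [leadingCoeff, hdeq]; exact hne
  obtain ⟨χ, h1, h2⟩ := tarski_step φ φ' p hd (hz p hpF) (hlcs p hpF) G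
    (by
      intro q hq h0
      have : (q.map φ).coeff q.natDegree = 0 := by rw [h0]; simp
      rw [coeff_map] at this
      exact hGlc φ hz q hq this)
    (by simp [hGdef]) ψ (fun q hq => hψ q (Multiset.mem_add.2 (Or.inl hq)))
    (by
      intro q hq y hy
      have hy' : eval₂ φ' (ψ y) q = 0 := by
        have := hψ q (Multiset.mem_add.2 (Or.inl hq)) y
        rw [hy, sign_zero] at this
        exact sign_eq_zero_iff.1 this.symm
      by_cases hqd : 0 < q.natDegree
      · obtain ⟨-, k, u, hku⟩ := hrem q hqd
        have hr := hψ (rem q) (Multiset.mem_add.2 (Or.inr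
          (Multiset.mem_map_of_mem _ (Multiset.mem_filter.2 ⟨hq, hqd⟩)))) y
        have ev : ∀ (f : R →+* ℝ) (w : ℝ), eval₂ f w q = 0 → f q.leadingCoeff ≠ 0 →
            SignType.sign (eval₂ f w p) = SignType.sign (eval₂ f w (rem q)) := by
          intro f w hw hf
          have := congrArg (eval₂ f w) hku
          rw [eval₂_mul, eval₂_C, eval₂_add, eval₂_mul, hw, mul_zero, zero_add] at this
          have hpos : 0 < f (q.leadingCoeff ^ (2 * k)) := by
            rw [map_pow, pow_mul]
            positivity
          rw [← this, sign_mul, sign_pos hpos, one_mul]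
        rw [ev φ y hy (hGlc φ hz q hq), ev φ' _ hy' (hGlc φ' hz' q hq), hr]
      · exfalso
        have h0 : q.natDegree = 0 := by omega
        rw [eq_C_of_natDegree_eq_zero h0, eval₂_C] at hy
        have := hGlc φ hz q hq
        rw [leadingCoeff, h0] at this
        exact this hy)
  refine ⟨χ, fun q hq y => ?_⟩
  rw [← Multiset.cons_erase hpF, Multiset.mem_cons] at hq
  rcases hq with rfl | hq
  · exact h2 y
  · exact h1 q (Multiset.mem_add.2 (Or.inl hq)) y

end JG

namespace JG

/-- semialgebraic predicates -/
def SA {σ : Type} (P : (σ → ℝ) → Prop) : Prop :=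
  ∃ T : Set (MvPolynomial σ ℝ), T.Finite ∧ ∀ x x' : σ → ℝ,
    (∀ r ∈ T, SignType.sign (MvPolynomial.eval x r) = SignType.sign (MvPolynomial.eval x' r)) →
      (P x → P x')

/-- polynomial functions -/
def IsPoly {σ : Type} (a : (σ → ℝ) → ℝ) : Prop :=
  ∃ p : MvPolynomial σ ℝ, ∀ z, a z = MvPolynomial.eval z p

section
variable {σ τ : Type}

lemma IsPoly.var (i : σ) : IsPoly (fun z : σ → ℝ => z i) := ⟨MvPolynomial.X i, by simp⟩
lemma IsPoly.const (c : ℝ) : IsPoly (fun _ : σ → ℝ => c) := ⟨MvPolynomial.C c, by simp⟩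
lemma IsPoly.add {a b : (σ → ℝ) → ℝ} (ha : IsPoly a) (hb : IsPoly b) :
    IsPoly (fun z => a z + b z) := by
  obtain ⟨p, hp⟩ := ha; obtain ⟨q, hq⟩ := hb
  exact ⟨p + q, by simp [hp, hq]⟩
lemma IsPoly.sub {a b : (σ → ℝ) → ℝ} (ha : IsPoly a) (hb : IsPoly b) :
    IsPoly (fun z => a z - b z) := by
  obtain ⟨p, hp⟩ := ha; obtain ⟨q, hq⟩ := hb
  exact ⟨p - q, by simp [hp, hq]⟩
lemma IsPoly.mul {a b : (σ → ℝ) → ℝ} (ha : IsPoly a) (hb : IsPoly b) :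
    IsPoly (fun z => a z * b z) := by
  obtain ⟨p, hp⟩ := ha; obtain ⟨q, hq⟩ := hb
  exact ⟨p * q, by simp [hp, hq]⟩
lemma IsPoly.pow {a : (σ → ℝ) → ℝ} (ha : IsPoly a) (k : ℕ) :
    IsPoly (fun z => a z ^ k) := by
  obtain ⟨p, hp⟩ := ha
  exact ⟨p ^ k, by simp [hp]⟩
lemma IsPoly.sum {ι : Type} (s : Finset ι) {a : ι → (σ → ℝ) → ℝ} (ha : ∀ i, IsPoly (a i)) :
    IsPoly (fun z => ∑ i ∈ s, a i z) := by
  choose p hp using ha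
  exact ⟨∑ i ∈ s, p i, by simp [hp]⟩
lemma IsPoly.comp {a : (σ → ℝ) → ℝ} (ha : IsPoly a) {F : (τ → ℝ) → (σ → ℝ)}
    (hF : ∀ i, IsPoly (fun z => F z i)) : IsPoly (fun z => a (F z)) := by
  obtain ⟨p, hp⟩ := ha
  choose q hq using hF
  refine ⟨MvPolynomial.bind₁ q p, fun z => ?_⟩
  show a (F z) = _
  have e : F z = fun i => MvPolynomial.eval z (q i) := funext fun i => hq i z
  rw [hp, e]
  simp only [MvPolynomial.eval, MvPolynomial.eval₂Hom_bind₁]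

lemma SA.not {P : (σ → ℝ) → Prop} (h : SA P) : SA (fun x => ¬ P x) := by
  obtain ⟨T, hT, h⟩ := h
  exact ⟨T, hT, fun x x' hx hP hP' => hP (h x' x (fun r hr => (hx r hr).symm) hP')⟩

lemma SA.and {P Q : (σ → ℝ) → Prop} (hP : SA P) (hQ : SA Q) : SA (fun x => P x ∧ Q x) := by
  obtain ⟨T, hT, h⟩ := hP
  obtain ⟨S, hS, h'⟩ := hQ
  exact ⟨T ∪ S, hT.union hS, fun x x' hx hP => ⟨h x x' (fun r hr => hx r (Or.inl hr)) hP.1,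
    h' x x' (fun r hr => hx r (Or.inr hr)) hP.2⟩⟩

lemma SA.congr {P Q : (σ → ℝ) → Prop} (hP : SA P) (h : ∀ x, P x ↔ Q x) : SA Q := by
  have : P = Q := funext fun x => propext (h x)
  rwa [← this]

lemma SA.or {P Q : (σ → ℝ) → Prop} (hP : SA P) (hQ : SA Q) : SA (fun x => P x ∨ Q x) :=
  (hP.not.and hQ.not).not.congr (fun x => by tauto)

lemma SA.imp {P Q : (σ → ℝ) → Prop} (hP : SA P) (hQ : SA Q) : SA (fun x => P x → Q x) :=
  (hP.and hQ.not).not.congr (fun x => by tauto)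

lemma SA.lt {a b : (σ → ℝ) → ℝ} (ha : IsPoly a) (hb : IsPoly b) : SA (fun x => a x < b x) := by
  obtain ⟨p, hp⟩ := hb.sub ha
  refine ⟨{p}, Set.finite_singleton _, fun x x' h hx => ?_⟩
  have h := h p rfl
  rw [← hp, ← hp, sign_pos (by linarith)] at h
  have := sign_eq_one_iff.1 h.symm
  linarith

lemma SA.le {a b : (σ → ℝ) → ℝ} (ha : IsPoly a) (hb : IsPoly b) : SA (fun x => a x ≤ b x) :=
  (SA.lt hb ha).not.congr (fun x => by simp)

lemma SA.eq {a b : (σ → ℝ) → ℝ} (ha : IsPoly a) (hb : IsPoly b) : SA (fun x => a x = b x) :=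
  ((SA.le ha hb).and (SA.le hb ha)).congr (fun x => ⟨fun h => le_antisymm h.1 h.2,
    fun h => ⟨h.le, h.ge⟩⟩)

lemma SA.subst {P : (σ → ℝ) → Prop} (hP : SA P) {F : (τ → ℝ) → (σ → ℝ)}
    (hF : ∀ i, IsPoly (fun z => F z i)) : SA (fun z => P (F z)) := by
  obtain ⟨T, hT, h⟩ := hP
  have : ∀ p : MvPolynomial σ ℝ, IsPoly (fun z => MvPolynomial.eval (F z) p) := fun p =>
    IsPoly.comp (a := fun x => MvPolynomial.eval x p) ⟨p, fun _ => rfl⟩ hF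
  choose q hq using this
  refine ⟨q '' T, hT.image _, fun x x' hx => h _ _ (fun r hr => ?_)⟩
  have := hx (q r) ⟨r, hr, rfl⟩
  rwa [← hq, ← hq] at this

lemma eval_option (p : MvPolynomial (Option σ) ℝ) (x : σ → ℝ) (y : ℝ) :
    MvPolynomial.eval (fun o : Option σ => o.elim y x) p =
      Polynomial.eval₂ (MvPolynomial.eval x) y (MvPolynomial.optionEquivLeft ℝ σ p) := by
  induction p using MvPolynomial.induction_on with
  | C a => simp
  | add p q hp hq => simp [hp, hq, Polynomial.eval₂_add]
  | mul_X p i hp =>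
    rw [map_mul, map_mul, hp, Polynomial.eval₂_mul]
    cases i <;> simp

lemma SA.ex {Q : ℝ → (σ → ℝ) → Prop}
    (h : SA (fun z : Option σ → ℝ => Q (z none) (fun i => z (some i)))) :
    SA (fun x => ∃ y, Q y x) := by
  classical
  obtain ⟨T, hT, h⟩ := h
  obtain ⟨S, hS, hS'⟩ := tarski_iso
    ((hT.toFinset.image (MvPolynomial.optionEquivLeft ℝ σ)).val)
  refine ⟨S, hS, fun x x' hx => ?_⟩
  rintro ⟨y, hy⟩
  obtain ⟨ψ, hψ⟩ := hS' (MvPolynomial.eval x) (MvPolynomial.eval x') hx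
  refine ⟨ψ y, ?_⟩
  refine h (fun o : Option σ => o.elim y x) (fun o : Option σ => o.elim (ψ y) x')
    (fun r hr => ?_) hy
  rw [eval_option, eval_option]
  apply hψ
  rw [Finset.mem_val, Finset.mem_image]
  exact ⟨r, by simpa using hr, rfl⟩

lemma SA.all {Q : ℝ → (σ → ℝ) → Prop}
    (h : SA (fun z : Option σ → ℝ => Q (z none) (fun i => z (some i)))) :
    SA (fun x => ∀ y, Q y x) :=
  (SA.ex (Q := fun y x => ¬ Q y x) h.not).not.congr (fun x => by simp)

lemma SA.ex_fin (d : ℕ) : ∀ {σ : Type} {Q : (σ → ℝ) → (Fin d → ℝ) → Prop},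
    SA (fun z : σ ⊕ Fin d → ℝ => Q (fun i => z (Sum.inl i)) (fun i => z (Sum.inr i))) →
    SA (fun x => ∃ y, Q x y) := by
  induction d with
  | zero =>
    intro σ Q h
    have := h.subst (F := fun (z : σ → ℝ) (i : σ ⊕ Fin 0) => Sum.elim z Fin.elim0 i)
      (by rintro (i | i)
          · exact IsPoly.var i
          · exact i.elim0)
    refine this.congr (fun x => ⟨fun h => ⟨_, h⟩, ?_⟩)
    rintro ⟨y, hy⟩
    have e : y = Fin.elim0 := funext fun i => i.elim0
    rw [e] at hy
    exact hy
  | succ d ih =>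
    intro σ Q h
    have h1 : SA (fun x : Option σ → ℝ => ∃ y : Fin d → ℝ,
        Q (fun i => x (some i)) (Fin.cons (x none) y)) := by
      apply ih (Q := fun (x : Option σ → ℝ) (y : Fin d → ℝ) =>
        Q (fun i => x (some i)) (Fin.cons (x none) y))
      refine (h.subst (F := fun (w : Option σ ⊕ Fin d → ℝ) (i : σ ⊕ Fin (d + 1)) =>
        Sum.elim (fun j => w (Sum.inl (some j)))
          (Fin.cons (w (Sum.inl none)) (fun j => w (Sum.inr j)) : Fin (d + 1) → ℝ) i) ?_).congr ?_
      · rintro (i | i)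
        · exact IsPoly.var _
        · refine Fin.cases ?_ (fun i => ?_) i
          · exact IsPoly.var _
          · exact IsPoly.var _
      · intro x; exact Iff.rfl
    refine (SA.ex (Q := fun (y : ℝ) (x : σ → ℝ) => ∃ y' : Fin d → ℝ, Q x (Fin.cons y y')) h1).congr
      (fun x => ⟨?_, ?_⟩)
    · rintro ⟨y, y', h⟩; exact ⟨_, h⟩
    · rintro ⟨y, h⟩
      exact ⟨y 0, Fin.tail y, by rwa [Fin.cons_self_tail]⟩

lemma SA.ex_block {κ : Type} [Fintype κ] {Q : (σ → ℝ) → (κ → ℝ) → Prop}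
    (h : SA (fun z : σ ⊕ κ → ℝ => Q (fun i => z (Sum.inl i)) (fun i => z (Sum.inr i)))) :
    SA (fun x => ∃ y, Q x y) := by
  let e := Fintype.equivFin κ
  have := SA.ex_fin (Fintype.card κ) (σ := σ) (Q := fun x y => Q x (fun k => y (e k)))
    (h.subst (F := fun (w : σ ⊕ Fin (Fintype.card κ) → ℝ) (i : σ ⊕ κ) =>
      Sum.elim (fun j => w (Sum.inl j)) (fun j => w (Sum.inr (e j))) i)
      (by rintro (i | i) <;> exact IsPoly.var _))
  refine this.congr (fun x => ⟨?_, ?_⟩)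
  · rintro ⟨y, h⟩; exact ⟨_, h⟩
  · rintro ⟨y, h⟩; exact ⟨fun i => y (e.symm i), by simpa using h⟩

lemma SA.all_block {κ : Type} [Fintype κ] {Q : (σ → ℝ) → (κ → ℝ) → Prop}
    (h : SA (fun z : σ ⊕ κ → ℝ => Q (fun i => z (Sum.inl i)) (fun i => z (Sum.inr i)))) :
    SA (fun x => ∀ y, Q x y) :=
  (SA.ex_block (Q := fun x y => ¬ Q x y) h.not).not.congr (fun x => by simp)

end

/-- one variable -/
def SA1 (P : ℝ → Prop) : Prop := SA (fun z : Unit → ℝ => P (z ()))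
/-- two variables -/
def SA2 (R : ℝ → ℝ → Prop) : Prop := SA (fun z : Fin 2 → ℝ => R (z 0) (z 1))

lemma SA2.subst {τ : Type} {R : ℝ → ℝ → Prop} (h : SA2 R) {a b : (τ → ℝ) → ℝ} (ha : IsPoly a)
    (hb : IsPoly b) : SA (fun z => R (a z) (b z)) := by
  have := SA.subst h (F := fun (z : τ → ℝ) (i : Fin 2) => if i = 0 then a z else b z)
    (by intro i; fin_cases i
        · simpa using ha
        · simpa using hb)
  exact this.congr (fun x => by simp)

lemma SA2.swap {R : ℝ → ℝ → Prop} (h : SA2 R) : SA2 (fun t s => R s t) :=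
  h.subst (IsPoly.var 1) (IsPoly.var 0)

lemma SA2.right {R : ℝ → ℝ → Prop} (h : SA2 R) (t : ℝ) : SA1 (R t) :=
  h.subst (IsPoly.const t) (IsPoly.var ())

open Topology in
lemma SA2.eventually_gt {R : ℝ → ℝ → Prop} (h : SA2 R) :
    SA1 (fun t => ∀ᶠ s in 𝓝[>] t, R t s) := by
  have h1 : SA (fun z : Unit → ℝ => ∃ e : ℝ, z () < e ∧ ∀ s : ℝ, z () < s → s < e → R (z ()) s) := by
    apply SA.ex
    apply SA.and (SA.lt (IsPoly.var _) (IsPoly.var _))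
    apply SA.all (Q := fun (s : ℝ) (z : Option Unit → ℝ) =>
      z (some ()) < s → s < z none → R (z (some ())) s)
    exact (SA.lt (IsPoly.var _) (IsPoly.var _)).imp
      ((SA.lt (IsPoly.var _) (IsPoly.var _)).imp (h.subst (IsPoly.var _) (IsPoly.var _)))
  refine h1.congr (fun z => ?_)
  beta_reduce
  rw [Filter.eventually_iff, mem_nhdsGT_iff_exists_Ioo_subset]
  constructor
  · rintro ⟨e, h1, h2⟩; exact ⟨e, h1, fun s hs => h2 s hs.1 hs.2⟩
  · rintro ⟨e, h1, h2⟩; exact ⟨e, h1, fun s hs hs' => h2 ⟨hs, hs'⟩⟩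

open Topology in
lemma SA2.eventually_lt {R : ℝ → ℝ → Prop} (h : SA2 R) :
    SA1 (fun t => ∀ᶠ s in 𝓝[<] t, R t s) := by
  have h1 : SA (fun z : Unit → ℝ => ∃ e : ℝ, e < z () ∧ ∀ s : ℝ, e < s → s < z () → R (z ()) s) := by
    apply SA.ex
    apply SA.and (SA.lt (IsPoly.var _) (IsPoly.var _))
    apply SA.all (Q := fun (s : ℝ) (z : Option Unit → ℝ) =>
      z none < s → s < z (some ()) → R (z (some ())) s)
    exact (SA.lt (IsPoly.var _) (IsPoly.var _)).imp
      ((SA.lt (IsPoly.var _) (IsPoly.var _)).imp (h.subst (IsPoly.var _) (IsPoly.var _)))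
  refine h1.congr (fun z => ?_)
  beta_reduce
  rw [Filter.eventually_iff, mem_nhdsLT_iff_exists_Ioo_subset]
  constructor
  · rintro ⟨e, h1, h2⟩; exact ⟨e, h1, fun s hs => h2 s hs.1 hs.2⟩
  · rintro ⟨e, h1, h2⟩; exact ⟨e, h1, fun s hs hs' => h2 ⟨hs, hs'⟩⟩

open Topology in
lemma poly_germ (q : Polynomial ℝ) (a : ℝ) :
    (∃ c, ∀ᶠ s in 𝓝[>] a, SignType.sign (q.eval s) = c) ∧
    (∃ c, ∀ᶠ s in 𝓝[<] a, SignType.sign (q.eval s) = c) := by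
  by_cases hq : q = 0
  · subst hq; simp
  have hfin : ({x | q.eval x = 0} \ {a}).Finite := (q.finite_setOfPred_isRoot hq).subset
    Set.sdiff_subset
  have hn : ∀ᶠ x in 𝓝 a, x ∉ ({x | q.eval x = 0} \ {a}) :=
    hfin.isClosed.isOpen_compl.mem_nhds (by simp)
  obtain ⟨ε, hε, hball⟩ := Metric.eventually_nhds_iff.1 hn
  have hne : ∀ x, |x - a| < ε → x ≠ a → q.eval x ≠ 0 := by
    intro x h1 h2 h3
    exact hball (by rwa [Real.dist_eq]) ⟨h3, h2⟩
  constructor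
  · have hc := sign_const q.continuous (a := a) (b := a + ε) (fun y h1 h2 =>
      hne y (by rw [abs_lt]; constructor <;> linarith) h1.ne')
    have hev : ∀ᶠ s in 𝓝[>] a, a < s ∧ s < a + ε := Ioo_mem_nhdsGT (by linarith)
    rcases hc with hc | hc
    · exact ⟨1, hev.mono fun s hs => sign_pos (hc s hs.1 hs.2)⟩
    · exact ⟨-1, hev.mono fun s hs => sign_neg (hc s hs.1 hs.2)⟩
  · have hc := sign_const q.continuous (a := a - ε) (b := a) (fun y h1 h2 =>
      hne y (by rw [abs_lt]; constructor <;> linarith) h2.ne)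
    have hev : ∀ᶠ s in 𝓝[<] a, a - ε < s ∧ s < a := Ioo_mem_nhdsLT (by linarith)
    rcases hc with hc | hc
    · exact ⟨1, hev.mono fun s hs => sign_pos (hc s hs.1 hs.2)⟩
    · exact ⟨-1, hev.mono fun s hs => sign_neg (hc s hs.1 hs.2)⟩

lemma germ_aux {P : ℝ → Prop} (h : SA1 P) (l : Filter ℝ)
    (hl : ∀ q : Polynomial ℝ, ∃ c, ∀ᶠ s in l, SignType.sign (q.eval s) = c) :
    (∀ᶠ s in l, P s) ∨ (∀ᶠ s in l, ¬ P s) := by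
  obtain ⟨T, hT, h⟩ := h
  have e : ∀ (r : MvPolynomial Unit ℝ) (s : ℝ), MvPolynomial.eval (fun _ => s) r =
      (MvPolynomial.aeval (fun _ => (Polynomial.X : Polynomial ℝ)) r).eval s := by
    intro r s
    induction r using MvPolynomial.induction_on with
    | C a => simp
    | add p q hp hq => simp [hp, hq]
    | mul_X p i hp => simp [hp]
  have : ∀ r : MvPolynomial Unit ℝ, ∃ c, ∀ᶠ s in l,
      SignType.sign (MvPolynomial.eval (fun _ => s) r) = c := by
    intro r; simp only [e]; exact hl _
  choose c hc using this
  have hall : ∀ᶠ s in l, ∀ r ∈ T, SignType.sign (MvPolynomial.eval (fun _ => s) r) = c r :=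
    (Filter.eventually_all_finite hT).2 (fun r _ => hc r)
  by_cases hex : ∃ s, (∀ r ∈ T, SignType.sign (MvPolynomial.eval (fun _ => s) r) = c r) ∧ P s
  · left
    obtain ⟨s0, h0, hP⟩ := hex
    exact hall.mono fun s hs => h (fun _ => s0) (fun _ => s)
      (fun r hr => (h0 r hr).trans (hs r hr).symm) hP
  · right
    push Not at hex
    exact hall.mono fun s hs => hex s hs

open Topology in
lemma SA1.germ_gt {P : ℝ → Prop} (h : SA1 P) (a : ℝ) :
    (∀ᶠ s in 𝓝[>] a, P s) ∨ (∀ᶠ s in 𝓝[>] a, ¬ P s) :=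
  germ_aux h _ (fun q => (poly_germ q a).1)

open Topology in
lemma SA1.germ_lt {P : ℝ → Prop} (h : SA1 P) (a : ℝ) :
    (∀ᶠ s in 𝓝[<] a, P s) ∨ (∀ᶠ s in 𝓝[<] a, ¬ P s) :=
  germ_aux h _ (fun q => (poly_germ q a).2)

end JG

namespace JG
open Topology

lemma local_to_global {h : ℝ → ℝ} {a c : ℝ}
    (H : ∀ t, a < t → t < c → (∀ᶠ s in 𝓝[>] t, h t ≤ h s) ∧ (∀ᶠ s in 𝓝[<] t, h s ≤ h t)) :
    MonotoneOn h (Set.Ioo a c) := by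
  intro x hx y hy hxy
  by_contra hlt
  push Not at hlt
  set S := {t | x ≤ t ∧ t ≤ y ∧ h x ≤ h t} with hS
  have hxS : x ∈ S := ⟨le_rfl, hxy, le_rfl⟩
  have hb : BddAbove S := ⟨y, fun t ht => ht.2.1⟩
  set z := sSup S with hz
  have hxz : x ≤ z := le_csSup hb hxS
  have hzy : z ≤ y := csSup_le ⟨x, hxS⟩ (fun t ht => ht.2.1)
  obtain ⟨H1, H2⟩ := H z (lt_of_lt_of_le hx.1 hxz) (lt_of_le_of_lt hzy hy.2)
  have hzS : h x ≤ h z := by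
    obtain ⟨e, he, h2⟩ := mem_nhdsLT_iff_exists_Ioo_subset.1 H2
    obtain ⟨s, hs, hes⟩ := exists_lt_of_lt_csSup ⟨x, hxS⟩ he
    rcases (le_csSup hb hs).lt_or_eq with hlt | heq
    · exact hs.2.2.trans (h2 ⟨hes, hlt⟩)
    · rw [hz, ← heq]; exact hs.2.2
  have hne : z < y := by
    refine lt_of_le_of_ne hzy ?_
    intro e
    rw [e] at hzS
    linarith
  obtain ⟨s, hs, hs'⟩ := (H1.and (Ioo_mem_nhdsGT hne)).exists
  have : s ∈ S := ⟨hxz.trans hs'.1.le, hs'.2.le, hzS.trans hs⟩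
  exact absurd (le_csSup hb this) (not_le.2 hs'.1)

lemma no_strict_min {h : ℝ → ℝ} {a c : ℝ} (hac : a < c)
    (H : ∀ t, a < t → t < c → (∀ᶠ s in 𝓝[>] t, h t < h s) ∧ (∀ᶠ s in 𝓝[<] t, h t < h s)) :
    False := by
  let E : ℕ → Set ℝ := fun n => {t | ∀ s, s ≠ t → |s - t| < 1 / (n + 1) → h t < h s}
  have hE : ∀ n, (E n).Countable := by
    intro n
    have hn : (0 : ℝ) < n + 1 := by positivity
    refine Set.MapsTo.countable_of_injOn (f := fun t => ⌊t * (n + 1)⌋) (t := Set.univ)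
      (fun _ _ => Set.mem_univ _) ?_ Set.countable_univ
    intro x hx y hy hxy
    by_contra hne
    have h1 := Int.abs_sub_lt_one_of_floor_eq_floor hxy
    have h2 : |x - y| < 1 / (n + 1) := by
      rw [← sub_mul, abs_mul, abs_of_pos hn] at h1
      rwa [lt_div_iff₀ hn]
    have h3 := hy x hne h2
    have h4 := hx y (Ne.symm hne) (by rwa [abs_sub_comm])
    linarith
  have hsub : Set.Ioo a c ⊆ ⋃ n, E n := by
    intro t ht
    obtain ⟨H1, H2⟩ := H t ht.1 ht.2
    obtain ⟨e, he, h1⟩ := mem_nhdsGT_iff_exists_Ioo_subset.1 H1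
    obtain ⟨d, hd, h2⟩ := mem_nhdsLT_iff_exists_Ioo_subset.1 H2
    have he' : t < e := he
    have hd' : d < t := hd
    obtain ⟨n, hn⟩ := exists_nat_one_div_lt (lt_min (sub_pos.2 he') (sub_pos.2 hd'))
    rw [Set.mem_iUnion]
    refine ⟨n, fun s hs hst => ?_⟩
    have hst' := hst.trans hn
    rw [lt_min_iff, abs_lt, abs_lt] at hst'
    rcases lt_or_gt_of_ne hs with hlt | hlt
    · exact h2 ⟨by linarith [hst'.2.1], hlt⟩
    · exact h1 ⟨hlt, by linarith [hst'.1.2]⟩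
  have hc : (Set.Ioo a c).Countable := (Set.countable_iUnion hE).mono hsub
  have := hc.measure_zero MeasureTheory.volume
  rw [Real.volume_Ioo, ENNReal.ofReal_eq_zero] at this
  linarith

lemma eventually_monotone {R : ℝ → ℝ → Prop} (hR : SA2 R) {h : ℝ → ℝ} {a c : ℝ} (hac : a < c)
    (hRh : ∀ t s, a < t → t < c → a < s → s < c → (R t s ↔ h t < h s)) :
    ∃ a', a ≤ a' ∧ a' < c ∧ (MonotoneOn h (Set.Ioo a' c) ∨ AntitoneOn h (Set.Ioo a' c)) := by
  have key : ∀ {P : ℝ → Prop}, SA1 P → ∃ b, a ≤ b ∧ b < c ∧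
      ((∀ t, b < t → t < c → P t) ∨ (∀ t, b < t → t < c → ¬ P t)) := by
    intro P hP
    rcases hP.germ_lt c with h | h
    · obtain ⟨e, he, h1⟩ := mem_nhdsLT_iff_exists_Ioo_subset.1 h
      exact ⟨max a e, le_max_left _ _, max_lt hac he, Or.inl fun t ht ht' =>
        h1 ⟨(le_max_right _ _).trans_lt ht, ht'⟩⟩
    · obtain ⟨e, he, h1⟩ := mem_nhdsLT_iff_exists_Ioo_subset.1 h
      exact ⟨max a e, le_max_left _ _, max_lt hac he, Or.inr fun t ht ht' =>
        h1 ⟨(le_max_right _ _).trans_lt ht, ht'⟩⟩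
  obtain ⟨b1, hb1, hb1', k1⟩ := key hR.eventually_gt
  obtain ⟨b2, hb2, hb2', k2⟩ := key hR.swap.eventually_gt
  obtain ⟨b3, hb3, hb3', k3⟩ := key hR.eventually_lt
  obtain ⟨b4, hb4, hb4', k4⟩ := key hR.swap.eventually_lt
  set b := max (max b1 b2) (max b3 b4) with hb
  have l1 : b1 ≤ b := (le_max_left _ _).trans (le_max_left _ _)
  have l2 : b2 ≤ b := (le_max_right _ _).trans (le_max_left _ _)
  have l3 : b3 ≤ b := (le_max_left _ _).trans (le_max_right _ _)
  have l4 : b4 ≤ b := (le_max_right _ _).trans (le_max_right _ _)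
  have hab : a ≤ b := hb1.trans l1
  have hbc : b < c := max_lt (max_lt hb1' hb2') (max_lt hb3' hb4')
  have nG : ∀ t, b < t → t < c → ∀ᶠ s in 𝓝[>] t, a < s ∧ s < c := fun t h1 h2 =>
    (show ∀ᶠ s in 𝓝[>] t, t < s ∧ s < c from Ioo_mem_nhdsGT h2).mono
      fun s hs => ⟨by linarith [hs.1], hs.2⟩
  have nL : ∀ t, b < t → t < c → ∀ᶠ s in 𝓝[<] t, a < s ∧ s < c := fun t h1 h2 =>
    (show ∀ᶠ s in 𝓝[<] t, b < s ∧ s < t from Ioo_mem_nhdsLT h1).mono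
      fun s hs => ⟨by linarith [hs.1], by linarith [hs.2]⟩
  refine ⟨b, hab, hbc, ?_⟩
  have conv1 : ∀ t s, b < t → t < c → a < s ∧ s < c → (R t s ↔ h t < h s) :=
    fun t s h1 h2 h3 => hRh t s (by linarith) h2 h3.1 h3.2
  have conv2 : ∀ t s, b < t → t < c → a < s ∧ s < c → (R s t ↔ h s < h t) :=
    fun t s h1 h2 h3 => hRh s t h3.1 h3.2 (by linarith) h2
  by_cases A1 : (∀ t, b2 < t → t < c → ¬ ∀ᶠ s in 𝓝[>] t, R s t) ∧
      (∀ t, b3 < t → t < c → ¬ ∀ᶠ s in 𝓝[<] t, R t s)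
  · left
    apply local_to_global
    intro t h1 h2
    constructor
    · have := ((hR.swap.right t).germ_gt t).resolve_left (A1.1 t (by linarith) h2)
      filter_upwards [this, nG t h1 h2] with s hs hs'
      rw [conv2 t s h1 h2 hs'] at hs
      linarith
    · have := ((hR.right t).germ_lt t).resolve_left (A1.2 t (by linarith) h2)
      filter_upwards [this, nL t h1 h2] with s hs hs'
      rw [conv1 t s h1 h2 hs'] at hs
      linarith
  by_cases A2 : (∀ t, b1 < t → t < c → ¬ ∀ᶠ s in 𝓝[>] t, R t s) ∧
      (∀ t, b4 < t → t < c → ¬ ∀ᶠ s in 𝓝[<] t, R s t)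
  · right
    have : MonotoneOn (fun t => - h t) (Set.Ioo b c) := by
      apply local_to_global
      intro t h1 h2
      constructor
      · have := ((hR.right t).germ_gt t).resolve_left (A2.1 t (by linarith) h2)
        filter_upwards [this, nG t h1 h2] with s hs hs'
        rw [conv1 t s h1 h2 hs'] at hs
        linarith
      · have := ((hR.swap.right t).germ_lt t).resolve_left (A2.2 t (by linarith) h2)
        filter_upwards [this, nL t h1 h2] with s hs hs'
        rw [conv2 t s h1 h2 hs'] at hs
        linarith
    intro x hx y hy hxy
    have := this hx hy hxy
    simp only at this
    linarith
  exfalso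
  set m := (b + c) / 2 with hm
  have hm1 : b < m := by rw [hm]; linarith
  have hm2 : m < c := by rw [hm]; linarith
  rcases k1 with k1 | k1 <;> rcases k2 with k2 | k2
  · obtain ⟨s, hs1, hs2, hs3⟩ := ((k1 m (by linarith) hm2).and
      ((k2 m (by linarith) hm2).and (nG m hm1 hm2))).exists
    rw [conv1 m s hm1 hm2 hs3] at hs1
    rw [conv2 m s hm1 hm2 hs3] at hs2
    linarith
  · rcases k3 with k3 | k3
    · apply no_strict_min (h := h) hbc
      intro t h1 h2
      constructor
      · filter_upwards [k1 t (by linarith) h2, nG t h1 h2] with s hs hs'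
        exact (conv1 t s h1 h2 hs').1 hs
      · filter_upwards [k3 t (by linarith) h2, nL t h1 h2] with s hs hs'
        exact (conv1 t s h1 h2 hs').1 hs
    · exact A1 ⟨k2, k3⟩
  · rcases k4 with k4 | k4
    · apply no_strict_min (h := fun t => - h t) hbc
      intro t h1 h2
      constructor
      · filter_upwards [k2 t (by linarith) h2, nG t h1 h2] with s hs hs'
        have := (conv2 t s h1 h2 hs').1 hs
        linarith
      · filter_upwards [k4 t (by linarith) h2, nL t h1 h2] with s hs hs'
        have := (conv2 t s h1 h2 hs').1 hs
        linarith
    · exact A2 ⟨k1, k4⟩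
  · rcases k3 with k3 | k3
    · rcases k4 with k4 | k4
      · obtain ⟨s, hs1, hs2, hs3⟩ := ((k3 m (by linarith) hm2).and
          ((k4 m (by linarith) hm2).and (nL m hm1 hm2))).exists
        rw [conv1 m s hm1 hm2 hs3] at hs1
        rw [conv2 m s hm1 hm2 hs3] at hs2
        linarith
      · exact A2 ⟨k1, k4⟩
    · exact A1 ⟨k2, k3⟩

end JG

namespace JG
open Topology

lemma IsPoly.continuous {σ : Type} {a : (σ → ℝ) → ℝ} (ha : IsPoly a) : Continuous a := by
  obtain ⟨p, hp⟩ := ha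
  have : a = fun z => MvPolynomial.eval z p := funext hp
  rw [this]
  exact MvPolynomial.continuous_eval p

section
variable {κ : Type} [Fintype κ]

/-- semialgebraic families -/
def SAF (S : ℝ → (κ → ℝ) → Prop) : Prop :=
  SA (fun z : Option κ → ℝ => S (z none) (fun k => z (some k)))

lemma SAF.subst {τ : Type} {S : ℝ → (κ → ℝ) → Prop} (h : SAF S) {a : (τ → ℝ) → ℝ}
    {b : (τ → ℝ) → κ → ℝ} (ha : IsPoly a) (hb : ∀ k, IsPoly (fun z => b z k)) :
    SA (fun z => S (a z) (b z)) :=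
  SA.subst h (F := fun (z : τ → ℝ) (i : Option κ) => i.elim (a z) (b z))
    (by rintro (_ | i)
        · exact ha
        · exact hb i)

/-- fiberwise minimisers -/
def smin (S : ℝ → (κ → ℝ) → Prop) (q : (κ → ℝ) → ℝ) (t : ℝ) (x : κ → ℝ) : Prop :=
  S t x ∧ ∀ y, S t y → q x ≤ q y

lemma SAF.smin {S : ℝ → (κ → ℝ) → Prop} (h : SAF S) {q : (κ → ℝ) → ℝ} (hq : IsPoly q) :
    SAF (smin S q) := by
  refine SA.and h ?_
  apply SA.all_block (Q := fun (z : Option κ → ℝ) (y : κ → ℝ) =>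
    S (z none) y → q (fun k => z (some k)) ≤ q y)
  exact (h.subst (IsPoly.var _) (fun k => IsPoly.var _)).imp
    (SA.le (hq.comp (fun k => IsPoly.var _)) (hq.comp (fun k => IsPoly.var _)))

lemma smin_compact {S : ℝ → (κ → ℝ) → Prop} {q : (κ → ℝ) → ℝ} (hq : IsPoly q) {t : ℝ}
    (h : IsCompact {x | S t x} ∧ ∃ x, S t x) :
    IsCompact {x | smin S q t x} ∧ ∃ x, smin S q t x := by
  obtain ⟨hc, x, hx⟩ := h
  obtain ⟨x0, h0, hmin⟩ := hc.exists_isMinOn ⟨x, hx⟩ hq.continuous.continuousOn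
  have hm : smin S q t x0 := ⟨h0, fun y hy => hmin hy⟩
  refine ⟨?_, x0, hm⟩
  have : {x | smin S q t x} = {x | S t x} ∩ {x | q x ≤ q x0} := by
    ext y
    constructor
    · intro hy; exact ⟨hy.1, hy.2 _ h0⟩
    · intro hy; exact ⟨hy.1, fun w hw => hy.2.trans (hmin hw)⟩
  rw [this]
  exact hc.inter_right (isClosed_le hq.continuous continuous_const)

lemma select (T : Set ℝ) (l : List κ) : ∀ (S : ℝ → (κ → ℝ) → Prop), SAF S →
    (∀ t ∈ T, IsCompact {x | S t x} ∧ ∃ x, S t x) →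
    ∃ S' : ℝ → (κ → ℝ) → Prop, SAF S' ∧ (∀ t x, S' t x → S t x) ∧
      (∀ t ∈ T, ∃ x, S' t x) ∧ ∀ t x y, S' t x → S' t y → ∀ i ∈ l, x i = y i := by
  induction l with
  | nil => intro S h h'; exact ⟨S, h, fun _ _ h => h, fun t ht => (h' t ht).2, by simp⟩
  | cons i l ih =>
    intro S h h'
    obtain ⟨S', h1, h2, h3, h4⟩ := ih (smin S (fun x => x i)) (h.smin (IsPoly.var i))
      (fun t ht => smin_compact (IsPoly.var i) (h' t ht))
    refine ⟨S', h1, fun t x hx => (h2 t x hx).1, h3, fun t x y hx hy k hk => ?_⟩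
    rcases List.mem_cons.1 hk with rfl | hk
    · exact le_antisymm ((h2 t x hx).2 y (h2 t y hy).1) ((h2 t y hy).2 x (h2 t x hx).1)
    · exact h4 t x y hx hy k hk

lemma SAF.rel {S : ℝ → (κ → ℝ) → Prop} (h : SAF S) {q : (κ → ℝ) → ℝ} (hq : IsPoly q) :
    SA2 (fun t s => ∃ x, ∃ y, S t x ∧ S s y ∧ q x < q y) := by
  apply SA.ex_block (Q := fun (z : Fin 2 → ℝ) (x : κ → ℝ) => ∃ y, S (z 0) x ∧ S (z 1) y ∧ q x < q y)
  apply SA.ex_block (Q := fun (z : Fin 2 ⊕ κ → ℝ) (y : κ → ℝ) =>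
    S (z (Sum.inl 0)) (fun k => z (Sum.inr k)) ∧ S (z (Sum.inl 1)) y ∧ q (fun k => z (Sum.inr k)) < q y)
  exact (h.subst (IsPoly.var _) (fun k => IsPoly.var _)).and
    ((h.subst (IsPoly.var _) (fun k => IsPoly.var _)).and
      (SA.lt (hq.comp (fun k => IsPoly.var _)) (hq.comp (fun k => IsPoly.var _))))

/-- a curve with monotone arclength satisfies a length estimate -/
lemma curve_est {b c K : ℝ} (hK : 0 ≤ K) {r Ψ : ℝ → ℝ} (hr : ∀ t, 0 ≤ r t)
    (hmono : MonotoneOn Ψ (Set.Ioo b c))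
    (hlip : ∀ t s, b < t → t < c → b < s → s < c →
      |s - t| ≤ r t * |Ψ s - Ψ t| + K * |Ψ s - Ψ t| ^ 2)
    {t1 t2 M : ℝ} (h1 : b < t1) (h12 : t1 ≤ t2) (h2 : t2 < c) (hM0 : 0 ≤ M)
    (hM : ∀ t, t1 < t → t < t2 → r t ≤ M) : t2 - t1 ≤ M * (Ψ t2 - Ψ t1) := by
  have claim : ∀ l, 0 < l → l * M < 1 → l * (t2 - t1) ≤ Ψ t2 - Ψ t1 := by
    intro l hl hlM
    have hloc : ∀ t, t1 < t → t < t2 → ∃ ρ > 0, ∀ s, b < s → s < c → |s - t| < ρ →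
        l * |s - t| ≤ |Ψ s - Ψ t| := by
      intro t ht1 ht2
      have hrl : l * r t < 1 := lt_of_le_of_lt (by gcongr; exact hM t ht1 ht2) hlM
      refine ⟨(1 - l * r t) / (K * l ^ 2 + 1), by
        apply div_pos <;> [linarith; positivity], fun s hs1 hs2 hst => ?_⟩
      by_contra hcon
      push Not at hcon
      have h := hlip t s (by linarith) (by linarith) hs1 hs2
      rw [lt_div_iff₀ (by positivity)] at hst
      set D := |Ψ s - Ψ t|
      have hD : 0 ≤ D := abs_nonneg _
      set e := |s - t|
      have he : 0 < e := by
        by_contra hne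
        nlinarith
      have e1 : r t * D ≤ r t * (l * e) := mul_le_mul_of_nonneg_left hcon.le (hr t)
      have e2 : K * D ^ 2 ≤ K * (l * e) ^ 2 := by gcongr
      nlinarith
    have hG : MonotoneOn (fun t => Ψ t - l * t) (Set.Ioo t1 t2) := by
      apply local_to_global
      intro t ht1 ht2
      obtain ⟨ρ, hρ, h⟩ := hloc t ht1 ht2
      constructor
      · have hev : ∀ᶠ s in 𝓝[>] t, t < s ∧ s < min t2 (t + ρ) :=
          Ioo_mem_nhdsGT (lt_min ht2 (by linarith))
        filter_upwards [hev] with s hs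
        have hs2 := lt_min_iff.1 hs.2
        have hab : |s - t| = s - t := abs_of_pos (by linarith [hs.1])
        have h3 := h s (by linarith [hs.1]) (by linarith) (by rw [hab]; linarith)
        have hm := hmono (a := t) (b := s) ⟨by linarith, by linarith⟩
          ⟨by linarith [hs.1], by linarith⟩ hs.1.le
        rw [hab, abs_of_nonneg (by linarith)] at h3
        linarith
      · have hev : ∀ᶠ s in 𝓝[<] t, max t1 (t - ρ) < s ∧ s < t :=
          Ioo_mem_nhdsLT (max_lt ht1 (by linarith))
        filter_upwards [hev] with s hs
        have hs2 := max_lt_iff.1 hs.1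
        have hab : |s - t| = t - s := by rw [abs_of_neg (by linarith [hs.2])]; ring
        have h3 := h s (by linarith) (by linarith [hs.2]) (by rw [hab]; linarith)
        have hm := hmono (a := s) (b := t) ⟨by linarith, by linarith [hs.2]⟩
          ⟨by linarith, by linarith⟩ hs.2.le
        rw [hab, abs_of_nonpos (by linarith)] at h3
        linarith
    by_contra hcon
    push Not at hcon
    set D := Ψ t2 - Ψ t1 with hD
    have hDl : D / l < t2 - t1 := by rwa [div_lt_iff₀ hl, mul_comm]
    have hD0 : 0 ≤ D := by
      have := hmono (a := t1) (b := t2) ⟨h1, by linarith⟩ ⟨by linarith, h2⟩ h12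
      linarith
    have hDl0 : 0 ≤ D / l := by positivity
    set e := (t2 - t1 - D / l) / 4 with he
    have he0 : 0 < e := by rw [he]; linarith
    have g1 := hG (a := t1 + e) (b := t2 - e) ⟨by linarith, by linarith⟩
      ⟨by linarith, by linarith⟩ (by linarith)
    have g2 := hmono (a := t1) (b := t1 + e) ⟨by linarith, by linarith⟩
      ⟨by linarith, by linarith⟩ (by linarith)
    have g3 := hmono (a := t2 - e) (b := t2) ⟨by linarith, by linarith⟩
      ⟨by linarith, by linarith⟩ (by linarith)
    simp only at g1
    have g4 : l * (t2 - t1 - 2 * e) ≤ D := by rw [hD]; linarith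
    rw [mul_comm, ← le_div_iff₀ hl] at g4
    linarith
  by_contra hcon
  push Not at hcon
  set D := Ψ t2 - Ψ t1 with hD
  have hD0 : 0 ≤ D := by
    have := hmono (a := t1) (b := t2) ⟨h1, by linarith⟩ ⟨by linarith, h2⟩ h12
    linarith
  have hMD : 0 ≤ M * D := by positivity
  set e := (t2 - t1 - M * D) / (2 * (M + 1)) with he
  have he0 : 0 < e := div_pos (by linarith) (by linarith)
  have hMe : M * e < t2 - t1 - M * D := by
    have : e * (2 * (M + 1)) = t2 - t1 - M * D := by rw [he]; field_simp
    nlinarith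
  have ht : 0 < t2 - t1 := by linarith
  have := claim ((D + e) / (t2 - t1)) (div_pos (by linarith) ht) (by
    rw [div_mul_eq_mul_div, div_lt_one ht]; linarith)
  rw [div_mul_cancel₀ _ ht.ne'] at this
  linarith

theorem kl {p N W : (κ → ℝ) → ℝ} (hp : IsPoly p) (hN : IsPoly N) (hW : IsPoly W)
    (hV : IsCompact {x | W x = 0}) {K : ℝ} (hK : 0 ≤ K)
    (hlip : ∀ x y, W x = 0 → W y = 0 →
      |p y - p x| ≤ √(N x) * (∑ i, |y i - x i|) + K * (∑ i, |y i - x i|) ^ 2) (c : ℝ) :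
    ∃ a < c, ∃ Ψ : ℝ → ℝ, ∃ B : ℝ, MonotoneOn Ψ (Set.Ioo a c) ∧ (∀ t ∈ Set.Ioo a c, Ψ t ≤ B) ∧
      ∀ x t2, W x = 0 → a < p x → p x ≤ t2 → t2 < c →
        t2 - p x ≤ √(N x) * (Ψ t2 - Ψ (p x)) := by
  let S0 : ℝ → (κ → ℝ) → Prop := fun t x => W x = 0 ∧ p x = t
  have hS0 : SAF S0 := by
    refine SA.and (SA.eq (hW.comp fun k => IsPoly.var _) (IsPoly.const 0))
      (SA.eq (hp.comp fun k => IsPoly.var _) (IsPoly.var _))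
  have hP : SA1 (fun t => ∃ x, S0 t x) := by
    apply SA.ex_block (Q := fun (z : Unit → ℝ) (x : κ → ℝ) => S0 (z ()) x)
    exact hS0.subst (IsPoly.var _) (fun k => IsPoly.var _)
  rcases hP.germ_lt c with hne | hemp
  swap
  · obtain ⟨a, ha, h⟩ := mem_nhdsLT_iff_exists_Ioo_subset.1 hemp
    refine ⟨a, ha, fun _ => 0, 0, fun _ _ _ _ _ => le_rfl, fun _ _ => le_rfl,
      fun x t2 hx h1 h2 h3 => ?_⟩
    exact absurd ⟨x, hx, rfl⟩ (h ⟨h1, h2.trans_lt h3⟩)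
  obtain ⟨a, ha, hne⟩ := mem_nhdsLT_iff_exists_Ioo_subset.1 hne
  have ha : a < c := ha
  obtain ⟨S, hS, hSsub, hSne, hSun⟩ := select (Set.Ioo a c) Finset.univ.toList (smin S0 N)
    (hS0.smin hN) (fun t ht => smin_compact hN
      ⟨hV.inter_right (isClosed_eq hp.continuous continuous_const), hne ht⟩)
  have hSun : ∀ t x y, S t x → S t y → x = y := fun t x y hx hy =>
    funext fun i => hSun t x y hx hy i (by simp)
  have : ∀ t, ∃ x, t ∈ Set.Ioo a c → S t x := by
    intro t
    by_cases ht : t ∈ Set.Ioo a c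
    · obtain ⟨x, hx⟩ := hSne t ht; exact ⟨x, fun _ => hx⟩
    · exact ⟨0, fun h => absurd h ht⟩
  choose x hx using this
  have hWx : ∀ t, a < t → t < c → W (x t) = 0 := fun t h1 h2 => (hSsub _ _ (hx t ⟨h1, h2⟩)).1.1
  have hpx : ∀ t, a < t → t < c → p (x t) = t := fun t h1 h2 => (hSsub _ _ (hx t ⟨h1, h2⟩)).1.2
  have hNx : ∀ y, W y = 0 → a < p y → p y < c → N (x (p y)) ≤ N y := fun y h1 h2 h3 =>
    (hSsub _ _ (hx (p y) ⟨h2, h3⟩)).2 y ⟨h1, rfl⟩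
  have hmon : ∀ q : (κ → ℝ) → ℝ, IsPoly q → ∃ a', a ≤ a' ∧ a' < c ∧
      (MonotoneOn (fun t => q (x t)) (Set.Ioo a' c) ∨ AntitoneOn (fun t => q (x t)) (Set.Ioo a' c)) := by
    intro q hq
    refine eventually_monotone (hS.rel hq) ha (fun t s h1 h2 h3 h4 => ⟨?_, ?_⟩)
    · rintro ⟨u, v, hu, hv, huv⟩
      rwa [hSun t _ _ hu (hx t ⟨h1, h2⟩), hSun s _ _ hv (hx s ⟨h3, h4⟩)] at huv
    · intro h
      exact ⟨_, _, hx t ⟨h1, h2⟩, hx s ⟨h3, h4⟩, h⟩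
  choose a1 ha1 ha1' hmono using fun i : κ => hmon _ (IsPoly.var i)
  obtain ⟨a2, ha2, ha2', hNmono⟩ := hmon N hN
  obtain ⟨b, hb1, hb2, hbc⟩ : ∃ b, (∀ i, a1 i ≤ b) ∧ a2 ≤ b ∧ b < c := by
    have e1 : ∀ᶠ b in 𝓝[<] c, ∀ i, a1 i ≤ b := eventually_all.2 fun i =>
      (show ∀ᶠ b in 𝓝[<] c, a1 i < b ∧ b < c from Ioo_mem_nhdsLT (ha1' i)).mono fun s hs => hs.1.le
    have e2 : ∀ᶠ b in 𝓝[<] c, a2 < b ∧ b < c := Ioo_mem_nhdsLT ha2'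
    obtain ⟨b, h1, h2⟩ := (e1.and e2).exists
    exact ⟨b, h1, h2.1.le, h2.2⟩
  have hab : a ≤ b := ha2.trans hb2
  have hsg : ∀ i, ∃ e : ℝ, |e| = 1 ∧ MonotoneOn (fun t => e * x t i) (Set.Ioo b c) := by
    intro i
    have hsub : Set.Ioo b c ⊆ Set.Ioo (a1 i) c := Set.Ioo_subset_Ioo_left (hb1 i)
    rcases hmono i with h | h
    · exact ⟨1, by simp, by simpa using h.mono hsub⟩
    · refine ⟨-1, by simp, fun u hu v hv huv => ?_⟩
      have := h (hsub hu) (hsub hv) huv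
      simp only at this ⊢
      linarith
  choose e he hem using hsg
  let Ψ : ℝ → ℝ := fun t => ∑ i, e i * x t i
  have hΨ : MonotoneOn Ψ (Set.Ioo b c) := fun u hu v hv huv =>
    Finset.sum_le_sum fun i _ => hem i hu hv huv
  have hΨd : ∀ t s, b < t → t < c → b < s → s < c → ∑ i, |x s i - x t i| = |Ψ s - Ψ t| := by
    have aux : ∀ t s, b < t → t ≤ s → s < c → ∑ i, |x s i - x t i| = Ψ s - Ψ t := by
      intro t s h1 h2 h3
      simp only [Ψ]
      rw [← Finset.sum_sub_distrib]
      refine Finset.sum_congr rfl fun i _ => ?_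
      have := hem i (a := t) (b := s) ⟨h1, by linarith⟩ ⟨by linarith, h3⟩ h2
      simp only at this
      rw [← mul_sub]
      have h4 : 0 ≤ e i * (x s i - x t i) := by rw [mul_sub]; linarith
      rw [← abs_of_nonneg h4, abs_mul, he, one_mul]
    intro t s h1 h2 h3 h4
    rcases le_total t s with h | h
    · rw [aux t s h1 h h4, abs_of_nonneg]
      have := hΨ (a := t) (b := s) ⟨h1, h2⟩ ⟨h3, h4⟩ h
      linarith
    · rw [abs_sub_comm, ← abs_of_nonneg (a := Ψ t - Ψ s), abs_abs, abs_of_nonneg, ← aux s t h3 h h2]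
      · exact Finset.sum_congr rfl fun i _ => abs_sub_comm _ _
      all_goals
        have := hΨ (a := s) (b := t) ⟨h3, h4⟩ ⟨h1, h2⟩ h
        linarith
  have hl2 : ∀ t s, b < t → t < c → b < s → s < c →
      |s - t| ≤ √(N (x t)) * |Ψ s - Ψ t| + K * |Ψ s - Ψ t| ^ 2 := by
    intro t s h1 h2 h3 h4
    have := hlip (x t) (x s) (hWx t (by linarith) h2) (hWx s (by linarith) h4)
    rwa [hpx t (by linarith) h2, hpx s (by linarith) h4, hΨd t s h1 h2 h3 h4] at this
  obtain ⟨B, hB⟩ : ∃ B, ∀ t ∈ Set.Ioo b c, Ψ t ≤ B := by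
    obtain ⟨C, hC⟩ := hV.isBounded.exists_norm_le
    refine ⟨∑ i : κ, C, fun t ht => Finset.sum_le_sum fun i _ => ?_⟩
    calc e i * x t i ≤ |e i * x t i| := le_abs_self _
      _ = |x t i| := by rw [abs_mul, he, one_mul]
      _ ≤ ‖x t‖ := norm_le_pi_norm (x t) i
      _ ≤ C := hC _ (hWx t (by linarith [ht.1]) ht.2)
  have hsub2 : Set.Ioo b c ⊆ Set.Ioo a2 c := Set.Ioo_subset_Ioo_left hb2
  rcases hNmono with hNm | hNm
  · set t0 := (b + c) / 2 with ht0
    have h0b : b < t0 := by rw [ht0]; linarith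
    have h0c : t0 < c := by rw [ht0]; linarith
    have hpos : 0 < √(N (x t0)) := by
      by_contra h0
      have h0 : √(N (x t0)) = 0 := le_antisymm (not_lt.1 h0) (Real.sqrt_nonneg _)
      have := curve_est hK (r := fun t => √(N (x t))) (fun t => Real.sqrt_nonneg _) hΨ hl2
        (t1 := (b + t0) / 2) (t2 := t0) (M := 0) (by linarith) (by linarith) h0c le_rfl (by
          intro t h1 h2
          rw [← h0]
          exact Real.sqrt_le_sqrt (hNm (hsub2 ⟨by linarith, by linarith⟩) (hsub2 ⟨h0b, h0c⟩) h2.le))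
      linarith
    refine ⟨t0, h0c, fun t => t / √(N (x t0)), c / √(N (x t0)), ?_, ?_, ?_⟩
    · intro u _ v _ huv
      exact div_le_div_of_nonneg_right huv hpos.le
    · intro t ht
      exact div_le_div_of_nonneg_right ht.2.le hpos.le
    · intro y t2 hy h1 h2 h3
      have h4 : √(N (x t0)) ≤ √(N y) := Real.sqrt_le_sqrt
        ((hNm (hsub2 ⟨h0b, h0c⟩) (hsub2 ⟨by linarith, by linarith⟩) h1.le).trans
          (hNx y hy (by linarith) (by linarith)))
      rw [← sub_div, mul_div_assoc', le_div_iff₀ hpos, mul_comm]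
      exact mul_le_mul_of_nonneg_right h4 (by linarith)
  · refine ⟨b, hbc, Ψ, B, hΨ, hB, ?_⟩
    intro y t2 hy h1 h2 h3
    have := curve_est hK (r := fun t => √(N (x t))) (fun t => Real.sqrt_nonneg _) hΨ hl2
        (t1 := p y) (t2 := t2) (M := √(N (x (p y)))) h1 h2 h3 (Real.sqrt_nonneg _) (by
          intro t h4 h5
          exact Real.sqrt_le_sqrt (hNm (hsub2 ⟨h1, by linarith⟩) (hsub2 ⟨by linarith, by linarith⟩) h4.le))
    refine this.trans (mul_le_mul_of_nonneg_right (Real.sqrt_le_sqrt (hNx y hy (by linarith)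
      (by linarith))) ?_)
    have := hΨ (a := p y) (b := t2) ⟨h1, by linarith⟩ ⟨by linarith, h3⟩ h2
    linarith

end
end JG

namespace JG
open Topology

lemma IsPoly.bdd {κ : Type} [Fintype κ] {a : (κ → ℝ) → ℝ} (ha : IsPoly a) (B : ℝ) :
    ∃ C, 0 ≤ C ∧ ∀ x, (∀ k, |x k| ≤ B) → |a x| ≤ C := by
  have hc : IsCompact (Set.pi Set.univ (fun _ : κ => Set.Icc (-B) B)) :=
    isCompact_univ_pi fun _ => isCompact_Icc
  obtain ⟨C, hC⟩ := (hc.image ha.continuous).isBounded.exists_norm_le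
  refine ⟨max C 0, le_max_right _ _, fun x hx => (hC (a x) ⟨x, ?_, rfl⟩).trans (le_max_left _ _)⟩
  intro k _
  exact abs_le.1 (hx k)

lemma taylor_aux {κ : Type} [Fintype κ] (p : MvPolynomial κ ℝ) :
    ∃ d : κ → (κ → ℝ) → ℝ, (∀ k, IsPoly (d k)) ∧
      (∀ x h : κ → ℝ, HasDerivAt (fun t : ℝ => MvPolynomial.eval (fun k => x k + t * h k) p)
        (∑ k, d k x * h k) 0) ∧
      ∀ B, ∃ C, 0 ≤ C ∧ ∀ x y : κ → ℝ, (∀ k, |x k| ≤ B) → (∀ k, |y k| ≤ B) →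
        |MvPolynomial.eval y p - MvPolynomial.eval x p - ∑ k, d k x * (y k - x k)|
          ≤ C * (∑ k, |y k - x k|) ^ 2 := by
  classical
  induction p using MvPolynomial.induction_on with
  | C a =>
    refine ⟨fun _ _ => 0, fun _ => IsPoly.const 0, fun x h => ?_, fun B => ⟨0, le_rfl, ?_⟩⟩
    · simpa using hasDerivAt_const (0 : ℝ) a
    · intro x y _ _; simp
  | add p q hp hq =>
    obtain ⟨d, hd, h1, h2⟩ := hp
    obtain ⟨e, he, g1, g2⟩ := hq
    refine ⟨fun k x => d k x + e k x, fun k => (hd k).add (he k), fun x h => ?_, fun B => ?_⟩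
    · have := (h1 x h).add (g1 x h)
      simp only [map_add, add_mul, Finset.sum_add_distrib]
      exact this
    · obtain ⟨C1, hC1, k1⟩ := h2 B
      obtain ⟨C2, hC2, k2⟩ := g2 B
      refine ⟨C1 + C2, by positivity, fun x y hx hy => ?_⟩
      have a1 := k1 x y hx hy
      have a2 := k2 x y hx hy
      simp only [map_add, add_mul, Finset.sum_add_distrib]
      rw [abs_le] at *
      constructor <;> linarith [a1.1, a1.2, a2.1, a2.2]
  | mul_X p i hp =>
    obtain ⟨d, hd, h1, h2⟩ := hp
    have hpp : IsPoly (fun x : κ → ℝ => MvPolynomial.eval x p) := ⟨p, fun _ => rfl⟩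
    have hsum : ∀ (x h : κ → ℝ), ∑ k, (d k x * x i + (if k = i then MvPolynomial.eval x p else 0)) * h k
        = (∑ k, d k x * h k) * x i + MvPolynomial.eval x p * h i := by
      intro x h
      simp only [add_mul, Finset.sum_add_distrib, ite_mul, zero_mul, Finset.sum_ite_eq',
        Finset.mem_univ, if_true, Finset.sum_mul]
      congr 1
      exact Finset.sum_congr rfl fun k _ => by ring
    refine ⟨fun k x => d k x * x i + (if k = i then MvPolynomial.eval x p else 0),
      fun k => ((hd k).mul (IsPoly.var i)).add ?_, fun x h => ?_, fun B => ?_⟩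
    · split_ifs
      · exact hpp
      · exact IsPoly.const 0
    · rw [hsum]
      simp only [map_mul, MvPolynomial.eval_X]
      have e1 : HasDerivAt (fun t : ℝ => x i + t * h i) (h i) 0 := by
        simpa using ((hasDerivAt_id (0 : ℝ)).mul_const (h i)).const_add (x i)
      have := (h1 x h).mul e1
      simp only [zero_mul, add_zero] at this
      exact this
    · obtain ⟨C1, hC1, k1⟩ := h2 B
      choose Cd hCd kd using fun k => (hd k).bdd B
      refine ⟨C1 * |B| + ∑ k, Cd k, by have := Finset.sum_nonneg (s := Finset.univ) (fun k _ => hCd k); positivity, fun x y hx hy => ?_⟩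
      rw [hsum x (fun k => y k - x k)]
      simp only [map_mul, MvPolynomial.eval_X]
      have a1 := k1 x y hx hy
      set S := ∑ k, |y k - x k| with hS
      have hle : ∀ k, |y k - x k| ≤ S := fun k =>
        Finset.single_le_sum (f := fun k => |y k - x k|) (fun _ _ => abs_nonneg _) (Finset.mem_univ k)
      have hS0 : 0 ≤ S := Finset.sum_nonneg fun _ _ => abs_nonneg _
      have a2 : |∑ k, d k x * (y k - x k)| ≤ (∑ k, Cd k) * S := by
        refine (Finset.abs_sum_le_sum_abs _ _).trans ?_
        rw [Finset.sum_mul]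
        refine Finset.sum_le_sum fun k _ => ?_
        rw [abs_mul]
        exact mul_le_mul (kd k x hx) (hle k) (abs_nonneg _) (hCd k)
      set Dx := ∑ k, d k x * (y k - x k)
      have e : MvPolynomial.eval y p * y i - MvPolynomial.eval x p * x i -
          (Dx * x i + MvPolynomial.eval x p * (y i - x i)) =
          (MvPolynomial.eval y p - MvPolynomial.eval x p - Dx) * y i + Dx * (y i - x i) := by ring
      rw [e]
      refine (abs_add_le _ _).trans ?_
      rw [abs_mul, abs_mul]
      have b1 := mul_le_mul a1 ((hy i).trans (le_abs_self B)) (abs_nonneg _) (by positivity)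
      have b2 := mul_le_mul a2 (hle i) (abs_nonneg _) ((abs_nonneg _).trans a2)
      calc _ ≤ _ := add_le_add b1 b2
        _ = _ := by ring

lemma taylor {κ : Type} [Fintype κ] {P : (κ → ℝ) → ℝ} (hP : IsPoly P) :
    ∃ d : κ → (κ → ℝ) → ℝ, (∀ k, IsPoly (d k)) ∧
      (∀ x h : κ → ℝ, HasDerivAt (fun t : ℝ => P (fun k => x k + t * h k))
        (∑ k, d k x * h k) 0) ∧
      ∀ B, ∃ C, 0 ≤ C ∧ ∀ x y : κ → ℝ, (∀ k, |x k| ≤ B) → (∀ k, |y k| ≤ B) →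
        |P y - P x - ∑ k, d k x * (y k - x k)| ≤ C * (∑ k, |y k - x k|) ^ 2 := by
  obtain ⟨p, hp⟩ := hP
  simp only [hp]
  exact taylor_aux p

/-- trigonometric step -/
lemma trig_step {h : ℝ → ℝ} {A α β θ : ℝ} (hh : ∀ t, h t = A + α * Real.cos (4 * t) + β * Real.sin (4 * t))
    (h0 : ∀ t, 0 ≤ h t) (hmax : ∀ t, h t ≤ h θ) (hmin : ∀ t, (∀ s, h s ≤ h t) → |θ| ≤ |t|) :
    |deriv h 0| * |θ| ≤ 2 * (h θ - h 0) ∧ (deriv h 0) ^ 2 ≤ 16 * h θ * (h θ - h 0) := by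
  have hder : ∀ t, HasDerivAt h (α * (-Real.sin (4 * t) * 4) + β * (Real.cos (4 * t) * 4)) t := by
    intro t
    have e : h = fun t => A + α * Real.cos (4 * t) + β * Real.sin (4 * t) := funext hh
    rw [e]
    have e4 : HasDerivAt (fun t : ℝ => 4 * t) 4 t := by
      simpa using (hasDerivAt_id t).const_mul 4
    have := ((e4.cos.const_mul α).const_add A).add (e4.sin.const_mul β)
    exact this
  have hd0 : deriv h 0 = 4 * β := by rw [(hder 0).deriv]; simp; ring
  have hcrit : -α * Real.sin (4 * θ) + β * Real.cos (4 * θ) = 0 := by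
    have : IsLocalMax h θ := Filter.Eventually.of_forall hmax
    have := this.hasDerivAt_eq_zero (hder θ)
    linarith
  set φ := 4 * θ with hφ
  set r := α * Real.cos φ + β * Real.sin φ with hr
  have hcs := Real.sin_sq_add_cos_sq φ
  have hα : α = r * Real.cos φ := by
    rw [hr]
    have : α = α * (Real.sin φ ^ 2 + Real.cos φ ^ 2) := by rw [hcs]; ring
    linear_combination this + (-Real.sin φ) * hcrit
  have hβ : β = r * Real.sin φ := by
    rw [hr]
    have : β = β * (Real.sin φ ^ 2 + Real.cos φ ^ 2) := by rw [hcs]; ring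
    linear_combination this + (Real.cos φ) * hcrit
  have hhθ : h θ = A + r := by rw [hh, hr]; ring
  have hop : h (θ + Real.pi / 4) = A - r := by
    rw [hh, show 4 * (θ + Real.pi / 4) = φ + Real.pi by rw [hφ]; ring, Real.cos_add_pi,
      Real.sin_add_pi, hr]; ring
  have hr0 : 0 ≤ r := by have := hmax (θ + Real.pi / 4); rw [hop, hhθ] at this; linarith
  have hrA : r ≤ A := by have := h0 (θ + Real.pi / 4); rw [hop] at this; linarith
  have hθ : |θ| ≤ Real.pi / 4 := by
    have hpi := Real.pi_pos
    set k : ℤ := round (φ / (2 * Real.pi)) with hk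
    have h1 := abs_sub_round (φ / (2 * Real.pi))
    set t := (φ - k * (2 * Real.pi)) / 4 with ht
    have h4t : 4 * t = φ - k * (2 * Real.pi) := by rw [ht]; ring
    have heq : h t = h θ := by
      rw [hh, hh, h4t, Real.cos_sub_int_mul_two_pi, Real.sin_sub_int_mul_two_pi]
    refine (hmin t (fun s => by rw [heq]; exact hmax s)).trans ?_
    have e : t = (φ / (2 * Real.pi) - k) * (Real.pi / 2) := by
      rw [ht]; field_simp; ring
    rw [e, abs_mul, abs_of_pos (by positivity : 0 < Real.pi / 2)]
    nlinarith
  have hh0 : h 0 = A + r * Real.cos φ := by rw [hh, ← hα]; simp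
  set ψ := 2 * |θ| with hψ
  have hψ0 : 0 ≤ ψ := by positivity
  have hψ1 : ψ ≤ Real.pi / 2 := by rw [hψ]; linarith
  have hφψ : |φ| = 2 * ψ := by rw [hφ, hψ, abs_mul]; norm_num; ring
  have hcos : Real.cos φ = 1 - 2 * Real.sin ψ ^ 2 := by
    rw [← Real.cos_abs, hφψ, Real.cos_two_mul]
    have := Real.sin_sq_add_cos_sq ψ
    linarith
  have hsinψ : 0 ≤ Real.sin ψ := Real.sin_nonneg_of_nonneg_of_le_pi hψ0 (by linarith [Real.pi_pos])
  have hcosψ : 0 ≤ Real.cos ψ := Real.cos_nonneg_of_neg_pi_div_two_le_of_le (by linarith) hψ1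
  have hsin : |Real.sin φ| = 2 * Real.sin ψ * Real.cos ψ := by
    have : |Real.sin φ| = |Real.sin (2 * ψ)| := by
      rw [← hφψ]
      rcases abs_choice φ with h | h <;> rw [h]
      rw [Real.sin_neg, abs_neg]
    rw [this, Real.sin_two_mul, abs_of_nonneg (by positivity)]
  have htan : ψ * Real.cos ψ ≤ Real.sin ψ := by
    rcases hψ1.lt_or_eq with hlt | heq
    · have := Real.le_tan hψ0 hlt
      have hc : 0 < Real.cos ψ := Real.cos_pos_of_mem_Ioo ⟨by linarith, hlt⟩
      rw [Real.tan_eq_sin_div_cos, le_div_iff₀ hc] at this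
      exact this
    · rw [heq, Real.cos_pi_div_two]; simp
  have hinc : h θ - h 0 = 2 * r * Real.sin ψ ^ 2 := by rw [hhθ, hh0, hcos]; ring
  have habs : |deriv h 0| = 8 * r * Real.sin ψ * Real.cos ψ := by
    rw [hd0, hβ, abs_mul, abs_mul, hsin, abs_of_nonneg hr0]; norm_num; ring
  have hcs2 := Real.sin_sq_add_cos_sq ψ
  constructor
  · rw [habs, hinc, show |θ| = ψ / 2 by rw [hψ]; ring]
    have : 0 ≤ 4 * r * Real.sin ψ * (Real.sin ψ - ψ * Real.cos ψ) :=
      mul_nonneg (by positivity) (by linarith)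
    linarith
  · rw [← sq_abs, habs, hinc, hhθ]
    have e1 : (8 * r * Real.sin ψ * Real.cos ψ) ^ 2 = (64 * r ^ 2 * Real.sin ψ ^ 2) * Real.cos ψ ^ 2 := by ring
    have e2 : Real.cos ψ ^ 2 ≤ 1 := by nlinarith [sq_nonneg (Real.sin ψ)]
    have e3 : (64 * r ^ 2 * Real.sin ψ ^ 2) * Real.cos ψ ^ 2 ≤ (64 * r ^ 2 * Real.sin ψ ^ 2) * 1 := by
      gcongr
    have e4 : 0 ≤ 32 * r * Real.sin ψ ^ 2 * (A - r) := mul_nonneg (by positivity) (by linarith)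
    rw [e1]
    nlinarith

/-- sum of two squares of a binary cubic form -/
lemma cubic_id (a b d e t : ℝ) :
    (a * Real.cos t ^ 3 + b * Real.cos t ^ 2 * Real.sin t + d * Real.cos t * Real.sin t ^ 2
      + e * Real.sin t ^ 3) ^ 2 +
    (-a * Real.sin t ^ 3 + b * Real.sin t ^ 2 * Real.cos t - d * Real.sin t * Real.cos t ^ 2
      + e * Real.cos t ^ 3) ^ 2 =
    (5 / 8 * (a ^ 2 + e ^ 2) + 1 / 8 * (b ^ 2 + d ^ 2) + 1 / 4 * (a * d + b * e)) +
    (3 / 8 * (a ^ 2 + e ^ 2) - 1 / 8 * (b ^ 2 + d ^ 2) - 1 / 4 * (a * d + b * e)) * Real.cos (4 * t) +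
    ((a * b - d * e) / 2) * Real.sin (4 * t) := by
  have h1 : Real.cos (4 * t) = 1 - 8 * Real.cos t ^ 2 * Real.sin t ^ 2 := by
    rw [show 4 * t = 2 * (2 * t) by ring, Real.cos_two_mul, Real.cos_two_mul]
    have := Real.sin_sq_add_cos_sq t
    rw [show Real.sin t ^ 2 = 1 - Real.cos t ^ 2 by linarith]; ring
  have h2 : Real.sin (4 * t) = 4 * Real.sin t * Real.cos t * (Real.cos t ^ 2 - Real.sin t ^ 2) := by
    rw [show 4 * t = 2 * (2 * t) by ring, Real.sin_two_mul, Real.sin_two_mul, Real.cos_two_mul]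
    have := Real.sin_sq_add_cos_sq t
    rw [show Real.sin t ^ 2 = 1 - Real.cos t ^ 2 by linarith]; ring
  rw [h1, h2]
  have h3 := Real.sin_sq_add_cos_sq t
  set c := Real.cos t
  set s := Real.sin t
  have k1 : c ^ 6 + s ^ 6 = 1 - 3 * c ^ 2 * s ^ 2 := by
    have : (s ^ 2 + c ^ 2) ^ 3 = 1 := by rw [h3]; norm_num
    linear_combination this - 3 * c ^ 2 * s ^ 2 * h3
  have k2 : c ^ 4 * s ^ 2 + s ^ 4 * c ^ 2 = c ^ 2 * s ^ 2 := by
    linear_combination c ^ 2 * s ^ 2 * h3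
  have k3 : c ^ 5 * s - s ^ 5 * c = c * s * (c ^ 2 - s ^ 2) := by
    linear_combination c * s * (c ^ 2 - s ^ 2) * h3
  linear_combination (a ^ 2 + e ^ 2) * k1 + (b ^ 2 + d ^ 2 + 2 * a * d + 2 * b * e) * k2 +
    2 * (a * b - d * e) * k3

end JG

namespace JG
open Topology

lemma givens_mul {n : ℕ} (Q : Matrix (Fin n) (Fin n) ℝ) {i j : Fin n} (hij : i ≠ j) (t : ℝ) (a b : Fin n) :
    (Q * givensR n i j t) a b = if b = i then Real.cos t * Q a i + Real.sin t * Q a j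
      else if b = j then -Real.sin t * Q a i + Real.cos t * Q a j else Q a b := by
  rw [Matrix.mul_apply]
  split_ifs with h1 h2
  · subst h1
    have : ∀ c, Q a c * givensR n b j t c b = (if c = b then Real.cos t * Q a c else 0) +
        (if c = j then Real.sin t * Q a c else 0) := by
      intro c
      unfold givensR
      by_cases h1 : c = b
      · have h2 : c ≠ j := h1 ▸ hij
        simp [h1, hij]; ring
      · by_cases h2 : c = j <;> simp [h1, h2, hij, Ne.symm hij]; ring
    simp [this, Finset.sum_add_distrib]
  · subst h2
    have : ∀ c, Q a c * givensR n i b t c b = (if c = i then -Real.sin t * Q a c else 0) +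
        (if c = b then Real.cos t * Q a c else 0) := by
      intro c
      unfold givensR
      by_cases h1 : c = i
      · simp [h1, hij, Ne.symm hij]; ring
      · by_cases h2 : c = b <;> simp [h1, h2, Ne.symm hij]; ring
    simp [this, Finset.sum_add_distrib]
  · have : ∀ c, Q a c * givensR n i j t c b = (if c = b then Q a c else 0) := by
      intro c
      unfold givensR
      simp [h1, h2]
    simp [this]

lemma givens_orth {n : ℕ} {i j : Fin n} (hij : i ≠ j) (t : ℝ) :
    (givensR n i j t)ᵀ * givensR n i j t = 1 := by
  have hcs := Real.sin_sq_add_cos_sq t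
  have hji := hij.symm
  ext a b
  rw [givens_mul _ hij]
  simp only [Matrix.transpose_apply, Matrix.one_apply]
  unfold givensR
  by_cases hbi : b = i
  · subst hbi
    by_cases hai : a = b
    · subst hai; simp [hij, hji]; linarith
    · by_cases haj : a = j
      · subst haj; simp [hij, hji]; ring
      · simp [hai, haj, hij, hji, Ne.symm hai, Ne.symm haj]
  · by_cases hbj : b = j
    · subst hbj
      by_cases hai : a = i
      · subst hai; simp [hij, hji]; ring
      · by_cases haj : a = b
        · subst haj; simp [hij, hji]; linarith
        · simp [hai, haj, hij, hji, Ne.symm hai, Ne.symm haj]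
    · by_cases hai : a = i
      · subst hai; simp [hij, hji, hbi, hbj, Ne.symm hbi]
      · by_cases haj : a = j
        · subst haj; simp [hij, hji, hbi, hbj, Ne.symm hbj]
        · simp [hai, haj, hbi, hbj, eq_comm]

lemma givens_zero {n : ℕ} {i j : Fin n} (hij : i ≠ j) (Q : Matrix (Fin n) (Fin n) ℝ) :
    Q * givensR n i j 0 = Q := by
  ext a b
  rw [givens_mul _ hij]
  split_ifs with h1 h2
  · subst h1; simp
  · subst h2; simp
  · rfl

lemma cubic_form {n : ℕ} (A : Fin n → Fin n → Fin n → ℝ) (u v : Fin n → ℝ) :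
    ∃ p q r w : ℝ, ∀ x y : ℝ, ∑ a, ∑ b, ∑ c, A a b c * (x * u a + y * v a) * (x * u b + y * v b) *
      (x * u c + y * v c) = p * x ^ 3 + q * x ^ 2 * y + r * x * y ^ 2 + w * y ^ 3 := by
  refine ⟨∑ a, ∑ b, ∑ c, A a b c * u a * u b * u c,
    ∑ a, ∑ b, ∑ c, A a b c * (u a * u b * v c + u a * v b * u c + v a * u b * u c),
    ∑ a, ∑ b, ∑ c, A a b c * (u a * v b * v c + v a * u b * v c + v a * v b * u c),
    ∑ a, ∑ b, ∑ c, A a b c * v a * v b * v c, fun x y => ?_⟩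
  simp only [Finset.sum_mul, ← Finset.sum_add_distrib]
  refine Finset.sum_congr rfl fun a _ => Finset.sum_congr rfl fun b _ =>
    Finset.sum_congr rfl fun c _ => ?_
  ring

lemma step_form {n L : ℕ} (A : Fin L → Fin n → Fin n → Fin n → ℝ)
    (f : Matrix (Fin n) (Fin n) ℝ → ℝ)
    (hf : ∀ Q : Matrix (Fin n) (Fin n) ℝ, f Q =
      ∑ ℓ, ∑ k, (∑ a, ∑ b, ∑ c, A ℓ a b c * Q a k * Q b k * Q c k) ^ 2)
    (Q : Matrix (Fin n) (Fin n) ℝ) {i j : Fin n} (hij : i ≠ j) :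
    ∃ A0 α β : ℝ, ∀ t, f (Q * givensR n i j t) = A0 + α * Real.cos (4 * t) + β * Real.sin (4 * t) := by
  have key : ∀ ℓ, ∃ A0 α β : ℝ, ∀ t : ℝ, ∑ k, (∑ a, ∑ b, ∑ c, A ℓ a b c * (Q * givensR n i j t) a k *
      (Q * givensR n i j t) b k * (Q * givensR n i j t) c k) ^ 2 =
      A0 + α * Real.cos (4 * t) + β * Real.sin (4 * t) := by
    intro ℓ
    obtain ⟨p, q, r, w, h⟩ := cubic_form (A ℓ) (fun a => Q a i) (fun a => Q a j)
    refine ⟨(5 / 8 * (p ^ 2 + w ^ 2) + 1 / 8 * (q ^ 2 + r ^ 2) + 1 / 4 * (p * r + q * w)) +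
      ∑ k ∈ (Finset.univ.erase i).erase j, (∑ a, ∑ b, ∑ c, A ℓ a b c * Q a k * Q b k * Q c k) ^ 2,
      (3 / 8 * (p ^ 2 + w ^ 2) - 1 / 8 * (q ^ 2 + r ^ 2) - 1 / 4 * (p * r + q * w)),
      ((p * q - r * w) / 2), fun t => ?_⟩
    rw [← Finset.add_sum_erase Finset.univ _ (Finset.mem_univ i),
      ← Finset.add_sum_erase (Finset.univ.erase i) _ (Finset.mem_erase.2 ⟨hij.symm, Finset.mem_univ j⟩)]
    have e1 : ∑ a, ∑ b, ∑ c, A ℓ a b c * (Q * givensR n i j t) a i *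
      (Q * givensR n i j t) b i * (Q * givensR n i j t) c i = p * Real.cos t ^ 3 +
        q * Real.cos t ^ 2 * Real.sin t + r * Real.cos t * Real.sin t ^ 2 + w * Real.sin t ^ 3 := by
      rw [← h]; simp only [givens_mul Q hij, if_true]
    have e2 : ∑ a, ∑ b, ∑ c, A ℓ a b c * (Q * givensR n i j t) a j *
      (Q * givensR n i j t) b j * (Q * givensR n i j t) c j = -p * Real.sin t ^ 3 +
        q * Real.sin t ^ 2 * Real.cos t - r * Real.sin t * Real.cos t ^ 2 + w * Real.cos t ^ 3 := by
      have := h (-Real.sin t) (Real.cos t)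
      simp only [givens_mul Q hij, if_true, if_neg hij.symm]
      rw [this]; ring
    have e3 : ∀ k ∈ (Finset.univ.erase i).erase j, (∑ a, ∑ b, ∑ c, A ℓ a b c * (Q * givensR n i j t) a k *
      (Q * givensR n i j t) b k * (Q * givensR n i j t) c k) ^ 2 =
        (∑ a, ∑ b, ∑ c, A ℓ a b c * Q a k * Q b k * Q c k) ^ 2 := by
      intro k hk
      have h1 : k ≠ j := (Finset.mem_erase.1 hk).1
      have h2 : k ≠ i := (Finset.mem_erase.1 (Finset.mem_erase.1 hk).2).1
      simp only [givens_mul Q hij, if_neg h1, if_neg h2]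
    rw [Finset.sum_congr rfl e3, e1, e2, ← add_assoc, cubic_id p q r w t]
    ring
  choose A0 α β h using key
  refine ⟨∑ ℓ, A0 ℓ, ∑ ℓ, α ℓ, ∑ ℓ, β ℓ, fun t => ?_⟩
  rw [hf, Finset.sum_congr rfl fun ℓ _ => h ℓ t]
  simp only [Finset.sum_add_distrib, Finset.sum_mul]

lemma orth_entry {n : ℕ} {Q : Matrix (Fin n) (Fin n) ℝ} (hQ : Qᵀ * Q = 1) (a b : Fin n) :
    |Q a b| ≤ 1 := by
  have h : (Qᵀ * Q) b b = 1 := by rw [hQ]; simp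
  rw [Matrix.mul_apply] at h
  simp only [Matrix.transpose_apply] at h
  have : Q a b * Q a b ≤ ∑ c, Q c b * Q c b :=
    Finset.single_le_sum (f := fun c => Q c b * Q c b) (fun c _ => mul_self_nonneg _)
      (Finset.mem_univ a)
  rw [← sq_le_one_iff_abs_le_one]
  nlinarith

lemma givens_move {n : ℕ} {Q : Matrix (Fin n) (Fin n) ℝ} (hQ : Qᵀ * Q = 1) {i j : Fin n} (hij : i ≠ j)
    (t : ℝ) (a b : Fin n) : |(Q * givensR n i j t) a b - Q a b| ≤ 2 * |t| := by
  have hc : |Real.cos t - 1| ≤ |t| := by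
    have h1 := Real.abs_sin_le_abs (x := t / 2)
    have e : Real.cos t - 1 = -2 * Real.sin (t / 2) ^ 2 := by
      have h := Real.cos_two_mul (t / 2)
      rw [show 2 * (t / 2) = t by ring] at h
      have := Real.sin_sq_add_cos_sq (t / 2)
      linarith
    rw [e, abs_mul, abs_pow]
    have h2 := Real.abs_sin_le_one (t / 2)
    rw [abs_div] at h1
    norm_num at h1 ⊢
    nlinarith [abs_nonneg (Real.sin (t / 2)), sq_abs (Real.sin (t / 2))]
  have hs : |Real.sin t| ≤ |t| := Real.abs_sin_le_abs
  have ht := abs_nonneg t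
  have key : ∀ x y p q : ℝ, |x| ≤ |t| → |y| ≤ |t| → |p| ≤ 1 → |q| ≤ 1 → |x * p + y * q| ≤ 2 * |t| := by
    intro x y p q h1 h2 h3 h4
    refine (abs_add_le _ _).trans ?_
    rw [abs_mul, abs_mul]
    have := mul_le_mul h1 h3 (abs_nonneg _) ht
    have := mul_le_mul h2 h4 (abs_nonneg _) ht
    linarith
  rw [givens_mul _ hij]
  split_ifs with h1 h2
  · subst h1
    rw [show Real.cos t * Q a b + Real.sin t * Q a j - Q a b =
      (Real.cos t - 1) * Q a b + Real.sin t * Q a j by ring]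
    exact key _ _ _ _ hc hs (orth_entry hQ _ _) (orth_entry hQ _ _)
  · subst h2
    rw [show -Real.sin t * Q a i + Real.cos t * Q a b - Q a b =
      (Real.cos t - 1) * Q a b + (-Real.sin t) * Q a i by ring]
    exact key _ _ _ _ hc (by rwa [abs_neg]) (orth_entry hQ _ _) (orth_entry hQ _ _)
  · simp

end JG

namespace JG
open Topology

/-- coordinates to matrices -/
def toM {n : ℕ} (x : Fin n × Fin n → ℝ) : Matrix (Fin n) (Fin n) ℝ := fun a b => x (a, b)

/-- matrices to coordinates -/
def toV {n : ℕ} (Q : Matrix (Fin n) (Fin n) ℝ) : Fin n × Fin n → ℝ := fun k => Q k.1 k.2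

lemma toM_toV {n : ℕ} (Q : Matrix (Fin n) (Fin n) ℝ) : toM (toV Q) = Q := rfl

/-- defect of orthogonality -/
def Worth {n : ℕ} (x : Fin n × Fin n → ℝ) : ℝ :=
  ∑ a, ∑ b, (((toM x)ᵀ * toM x) a b - (1 : Matrix (Fin n) (Fin n) ℝ) a b) ^ 2

lemma sumsq_zero {n : ℕ} {M : Matrix (Fin n) (Fin n) ℝ} (h : ∑ a, ∑ b, (M a b) ^ 2 = 0) : M = 0 := by
  ext a b
  have h1 := (Finset.sum_eq_zero_iff_of_nonneg (fun a _ =>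
    Finset.sum_nonneg fun b _ => sq_nonneg (M a b))).1 h a (Finset.mem_univ a)
  have h2 := (Finset.sum_eq_zero_iff_of_nonneg (fun b _ => sq_nonneg (M a b))).1 h1 b
    (Finset.mem_univ b)
  exact pow_eq_zero_iff (two_ne_zero) |>.1 h2

lemma Worth_iff {n : ℕ} (x : Fin n × Fin n → ℝ) : Worth x = 0 ↔ (toM x)ᵀ * toM x = 1 := by
  constructor
  · intro h
    apply sub_eq_zero.1
    apply sumsq_zero
    simp only [Matrix.sub_apply]
    exact h
  · intro h
    rw [Worth, h]
    simp

/-- matrices with polynomial entries -/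
def PM {n : ℕ} (F : (Fin n × Fin n → ℝ) → Matrix (Fin n) (Fin n) ℝ) : Prop :=
  ∀ a b, IsPoly (fun x => F x a b)

lemma PM.mul {n : ℕ} {F G : (Fin n × Fin n → ℝ) → Matrix (Fin n) (Fin n) ℝ} (hF : PM F) (hG : PM G) :
    PM (fun x => F x * G x) := by
  intro a b
  simp only [Matrix.mul_apply]
  exact IsPoly.sum _ fun c => (hF a c).mul (hG c b)

lemma PM.transpose {n : ℕ} {F : (Fin n × Fin n → ℝ) → Matrix (Fin n) (Fin n) ℝ} (hF : PM F) :
    PM (fun x => (F x)ᵀ) := fun a b => hF b a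

lemma PM.toM {n : ℕ} : PM (toM (n := n)) := fun a b => IsPoly.var (a, b)

lemma PM.sumsq {n : ℕ} {F : (Fin n × Fin n → ℝ) → Matrix (Fin n) (Fin n) ℝ} (hF : PM F) :
    IsPoly (fun x => ∑ a, ∑ b, (F x a b) ^ 2) :=
  IsPoly.sum _ fun a => IsPoly.sum _ fun b => (hF a b).pow 2

lemma Worth_poly {n : ℕ} : IsPoly (Worth (n := n)) := by
  apply PM.sumsq (F := fun x => (JG.toM x)ᵀ * JG.toM x - 1)
  intro a b
  exact IsPoly.sub ((PM.toM.transpose.mul PM.toM) a b) (IsPoly.const _)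

lemma Worth_compact {n : ℕ} : IsCompact {x : Fin n × Fin n → ℝ | Worth x = 0} := by
  have hc : IsCompact (Set.pi Set.univ (fun _ : Fin n × Fin n => Set.Icc (-1 : ℝ) 1)) :=
    isCompact_univ_pi fun _ => isCompact_Icc
  refine hc.of_isClosed_subset (isClosed_eq Worth_poly.continuous continuous_const) ?_
  intro x hx k _
  exact abs_le.1 (orth_entry ((Worth_iff x).1 hx) k.1 k.2)

lemma trace_eq {n : ℕ} (A B : Matrix (Fin n) (Fin n) ℝ) :
    ∑ i, ∑ j, A i j * B i j = (Aᵀ * B).trace := by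
  simp only [Matrix.trace, Matrix.diag, Matrix.mul_apply, Matrix.transpose_apply]
  exact Finset.sum_comm

lemma proj_id {n : ℕ} (g : Matrix (Fin n) (Fin n) ℝ → Matrix (Fin n) (Fin n) ℝ)
    {X Y : Matrix (Fin n) (Fin n) ℝ} (hX : Xᵀ * X = 1) (hY : Yᵀ * Y = 1) :
    ∑ i, ∑ j, g X i j * (Y - X) i j = ∑ i, ∑ j, projGradR g X i j * (Y - X) i j -
      (1 / 2) * ∑ i, ∑ j, g X i j * (X * ((Y - X)ᵀ * (Y - X))) i j := by
  rw [trace_eq, trace_eq, trace_eq]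
  have hX' : X * Xᵀ = 1 := mul_eq_one_comm.1 hX
  set Δ := Y - X with hΔ
  have hYe : Y = X + Δ := by rw [hΔ]; abel
  clear_value Δ
  have h1 : Xᵀ * Δ + Δᵀ * X + Δᵀ * Δ = 0 := by
    rw [hYe] at hY
    simp only [Matrix.transpose_add, Matrix.add_mul, Matrix.mul_add, hX] at hY
    have := sub_eq_zero.2 hY
    rw [← this]; abel
  set G := g X
  have h2 : X * (Δᵀ * Δ) = -Δ - X * Δᵀ * X := by
    have : X * (Xᵀ * Δ + Δᵀ * X + Δᵀ * Δ) = 0 := by rw [h1, Matrix.mul_zero]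
    rw [Matrix.mul_add, Matrix.mul_add, ← Matrix.mul_assoc, hX', Matrix.one_mul] at this
    rw [← sub_eq_zero, ← this, Matrix.mul_assoc]; abel
  have h3 : (projGradR g X)ᵀ * Δ = (1 / 2 : ℝ) • (Gᵀ * Δ - Xᵀ * G * Xᵀ * Δ) := by
    unfold projGradR
    simp only [Matrix.transpose_mul, Matrix.transpose_smul, Matrix.transpose_sub,
      Matrix.transpose_transpose, Matrix.smul_mul, Matrix.sub_mul, Matrix.mul_assoc]
    congr 2
    rw [← Matrix.mul_assoc X, hX', Matrix.one_mul]
  have h4 : (Xᵀ * G * Xᵀ * Δ).trace = (Gᵀ * (X * Δᵀ * X)).trace := by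
    rw [← Matrix.trace_transpose]
    simp only [Matrix.transpose_mul, Matrix.transpose_transpose]
    rw [← Matrix.mul_assoc, Matrix.trace_mul_comm]
    simp only [← Matrix.mul_assoc]
  have h5 : (Gᵀ * (-Δ - X * Δᵀ * X)).trace = -(Gᵀ * Δ).trace - (Gᵀ * (X * Δᵀ * X)).trace := by
    rw [Matrix.mul_sub, Matrix.mul_neg, Matrix.trace_sub, Matrix.trace_neg]
  rw [h2, h3, h5, Matrix.trace_smul, Matrix.trace_sub, h4, smul_eq_mul]
  ring

end JG

namespace JG
open Topology

lemma f_poly {n L : ℕ} (A : Fin L → Fin n → Fin n → Fin n → ℝ)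
    (f : Matrix (Fin n) (Fin n) ℝ → ℝ)
    (hf : ∀ Q : Matrix (Fin n) (Fin n) ℝ, f Q =
      ∑ ℓ, ∑ k, (∑ a, ∑ b, ∑ c, A ℓ a b c * Q a k * Q b k * Q c k) ^ 2) :
    IsPoly (fun x => f (toM x)) := by
  simp only [hf]
  refine IsPoly.sum _ fun ℓ => IsPoly.sum _ fun k => IsPoly.pow ?_ 2
  refine IsPoly.sum _ fun a => IsPoly.sum _ fun b => IsPoly.sum _ fun c => ?_
  exact (((IsPoly.const _).mul (PM.toM a k)).mul (PM.toM b k)).mul (PM.toM c k)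

lemma grad_lip {n : ℕ} (f : Matrix (Fin n) (Fin n) ℝ → ℝ)
    (hp : IsPoly (fun x => f (toM x)))
    (g : Matrix (Fin n) (Fin n) ℝ → Matrix (Fin n) (Fin n) ℝ) (hg : IsGradR f g) :
    PM (fun x => g (toM x)) ∧ ∃ K, 0 ≤ K ∧ ∀ x y : Fin n × Fin n → ℝ, Worth x = 0 → Worth y = 0 →
      |f (toM y) - f (toM x)| ≤ √(∑ a, ∑ b, (projGradR g (toM x) a b) ^ 2) * (∑ k, |y k - x k|) +
        K * (∑ k, |y k - x k|) ^ 2 := by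
  classical
  obtain ⟨d, hd, hder, htay⟩ := taylor hp
  have hdg : ∀ (x : Fin n × Fin n → ℝ) (H : Matrix (Fin n) (Fin n) ℝ),
      ∑ i, ∑ j, g (toM x) i j * H i j = ∑ k, d k x * toV H k := by
    intro x H
    exact (hg (toM x) H).unique (hder x (toV H))
  have hgd : ∀ x a b, g (toM x) a b = d (a, b) x := by
    intro x a b
    have := hdg x (Matrix.of fun i j => if i = a ∧ j = b then 1 else 0)
    rw [Fintype.sum_prod_type] at this
    simpa [toV, ite_and] using this
  have hgp : PM (fun x => g (toM x)) := by
    intro a b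
    simp only [hgd]
    exact hd _
  refine ⟨hgp, ?_⟩
  obtain ⟨C, hC, hC'⟩ := htay 1
  choose D hD hD' using fun a b => (hgp a b).bdd 1
  refine ⟨C + ∑ a, ∑ b, D a b, by
    have := Finset.sum_nonneg (s := Finset.univ) fun a _ =>
      Finset.sum_nonneg (s := Finset.univ) fun b _ => hD a b
    positivity, fun x y hx hy => ?_⟩
  have hX := (Worth_iff x).1 hx
  have hY := (Worth_iff y).1 hy
  have bx : ∀ k, |x k| ≤ 1 := fun k => orth_entry hX k.1 k.2
  have b_y : ∀ k, |y k| ≤ 1 := fun k => orth_entry hY k.1 k.2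
  have h1 := hC' x y bx b_y
  have h2 : ∑ k, d k x * (y k - x k) = ∑ i, ∑ j, g (toM x) i j * (toM y - toM x) i j :=
    (hdg x (toM y - toM x)).symm
  rw [h2, proj_id g hX hY] at h1
  set S := ∑ k, |y k - x k| with hS
  have hS0 : 0 ≤ S := Finset.sum_nonneg fun _ _ => abs_nonneg _
  have hle : ∀ k, |y k - x k| ≤ S := fun k =>
    Finset.single_le_sum (f := fun k => |y k - x k|) (fun _ _ => abs_nonneg _) (Finset.mem_univ k)
  set F := √(∑ a, ∑ b, (projGradR g (toM x) a b) ^ 2) with hF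
  have h3 : |∑ i, ∑ j, projGradR g (toM x) i j * (toM y - toM x) i j| ≤ F * S := by
    have hPle : ∀ a b, |projGradR g (toM x) a b| ≤ F := by
      intro a b
      apply Real.abs_le_sqrt
      refine le_trans ?_ (Finset.single_le_sum (f := fun a => ∑ b, (projGradR g (toM x) a b) ^ 2)
        (fun _ _ => Finset.sum_nonneg fun _ _ => sq_nonneg _) (Finset.mem_univ a))
      exact Finset.single_le_sum (f := fun b => (projGradR g (toM x) a b) ^ 2)
        (fun _ _ => sq_nonneg _) (Finset.mem_univ b)
    rw [hS, Fintype.sum_prod_type, Finset.mul_sum]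
    refine (Finset.abs_sum_le_sum_abs _ _).trans (Finset.sum_le_sum fun a _ => ?_)
    rw [Finset.mul_sum]
    refine (Finset.abs_sum_le_sum_abs _ _).trans (Finset.sum_le_sum fun b _ => ?_)
    rw [abs_mul]
    exact mul_le_mul_of_nonneg_right (hPle a b) (abs_nonneg _)
  have h4 : |∑ i, ∑ j, g (toM x) i j * (toM x * ((toM y - toM x)ᵀ * (toM y - toM x))) i j| ≤
      (∑ a, ∑ b, D a b) * S ^ 2 := by
    rw [Finset.sum_mul]
    refine (Finset.abs_sum_le_sum_abs _ _).trans (Finset.sum_le_sum fun a _ => ?_)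
    rw [Finset.sum_mul]
    refine (Finset.abs_sum_le_sum_abs _ _).trans (Finset.sum_le_sum fun b _ => ?_)
    rw [abs_mul]
    refine mul_le_mul (hD' a b x bx) ?_ (abs_nonneg _) (hD a b)
    rw [Matrix.mul_apply]
    have e : S ^ 2 = ∑ k : Fin n, ∑ l : Fin n, |y (l, k) - x (l, k)| * S := by
      have e0 : S = ∑ k : Fin n, ∑ l : Fin n, |y (l, k) - x (l, k)| := by
        rw [hS, Fintype.sum_prod_type, Finset.sum_comm]
      rw [sq]
      conv_lhs => lhs; rw [e0]
      rw [Finset.sum_mul]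
      exact Finset.sum_congr rfl fun k _ => Finset.sum_mul _ _ _
    rw [e]
    refine (Finset.abs_sum_le_sum_abs _ _).trans (Finset.sum_le_sum fun k _ => ?_)
    rw [abs_mul, Matrix.mul_apply]
    refine (mul_le_of_le_one_left (abs_nonneg _) (orth_entry hX a k)).trans ?_
    refine (Finset.abs_sum_le_sum_abs _ _).trans (Finset.sum_le_sum fun l _ => ?_)
    rw [abs_mul]
    exact mul_le_mul_of_nonneg_left (hle (l, b)) (abs_nonneg _)
  have h5 : 0 ≤ (∑ a, ∑ b, D a b) * S ^ 2 := (abs_nonneg _).trans h4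
  rw [abs_le] at *
  rw [add_mul]
  constructor <;> linarith [h1.1, h1.2, h3.1, h3.2, h4.1, h4.2]

lemma PM.proj {n : ℕ} {g : Matrix (Fin n) (Fin n) ℝ → Matrix (Fin n) (Fin n) ℝ}
    (hg : PM (fun x => g (JG.toM x))) : PM (fun x => projGradR g (JG.toM x)) := by
  unfold projGradR
  have h1 : PM (fun x => (JG.toM x)ᵀ * g (JG.toM x)) := PM.toM.transpose.mul hg
  refine PM.toM.mul (G := fun x => (1 / 2 : ℝ) • ((JG.toM x)ᵀ * g (JG.toM x) -
    ((JG.toM x)ᵀ * g (JG.toM x))ᵀ)) ?_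
  intro a b
  exact IsPoly.mul (IsPoly.const (1 / 2)) ((h1 a b).sub (h1 b a))

/-- abstract summability -/
lemma summable_steps {F θ P D : ℕ → ℝ} {δ c : ℝ} (hδ : 0 < δ) (hF : Monotone F)
    (hc : Tendsto F atTop (𝓝 c)) (hP : ∀ k, 0 ≤ P k) (hPD : ∀ k, δ * P k ≤ D k)
    (hD : ∀ k, D k * |θ k| ≤ 2 * (F (k + 1) - F k)) (h0 : ∀ k, F (k + 1) ≤ F k → θ k = 0)
    {a B : ℝ} {Ψ : ℝ → ℝ} (hac : a < c) (hΨ : MonotoneOn Ψ (Set.Ioo a c))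
    (hB : ∀ t ∈ Set.Ioo a c, Ψ t ≤ B)
    (hkl : ∀ k, a < F k → F (k + 1) < c → F (k + 1) - F k ≤ P k * (Ψ (F (k + 1)) - Ψ (F k))) :
    Summable (fun k => |θ k|) := by
  have hle : ∀ k, F k ≤ c := fun k => hF.ge_of_tendsto hc k
  by_cases hex : ∃ k, F k = c
  · obtain ⟨k0, hk0⟩ := hex
    refine summable_of_ne_finset_zero (s := Finset.range k0) fun k hk => ?_
    have hk : k0 ≤ k := by simpa using hk
    have h1 : F (k + 1) ≤ F k := (hle _).trans (hk0 ▸ hF hk)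
    rw [h0 k h1, abs_zero]
  · push Not at hex
    have hlt : ∀ k, F k < c := fun k => lt_of_le_of_ne (hle k) (hex k)
    obtain ⟨k0, hk0⟩ := (hc.eventually (lt_mem_nhds hac)).exists
    have hk0 : ∀ k, k0 ≤ k → a < F k := fun k hk => hk0.trans_le (hF hk)
    rw [← summable_nat_add_iff k0]
    have step : ∀ k, |θ (k + k0)| ≤ 2 / δ * (Ψ (F (k + 1 + k0)) - Ψ (F (k + k0))) := by
      intro k
      have e : k + 1 + k0 = (k + k0) + 1 := by ring
      rw [e]
      set m := k + k0
      have hm : a < F m := hk0 m (by omega)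
      have hm1 : a < F (m + 1) := hk0 _ (by omega)
      have hmon := hΨ ⟨hm, hlt m⟩ ⟨hm1, hlt _⟩ (hF (Nat.le_succ m))
      have hk := hkl m hm (hlt _)
      rcases (hP m).eq_or_lt with hz | hpos
      · rw [← hz, zero_mul] at hk
        rw [h0 m (by linarith), abs_zero]
        exact mul_nonneg (by positivity) (by linarith)
      · have h1 : δ * P m * |θ m| ≤ 2 * (P m * (Ψ (F (m + 1)) - Ψ (F m))) :=
          (mul_le_mul_of_nonneg_right (hPD m) (abs_nonneg _)).trans ((hD m).trans (by linarith))
        have h2 : P m * (δ * |θ m|) ≤ P m * (2 * (Ψ (F (m + 1)) - Ψ (F m))) := by linarith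
        have h3 := le_of_mul_le_mul_left h2 hpos
        rw [div_mul_eq_mul_div, le_div_iff₀ hδ]
        linarith
    refine summable_of_sum_range_le (c := 2 / δ * (B - Ψ (F (0 + k0)))) (fun _ => abs_nonneg _)
      fun N => ?_
    refine (Finset.sum_le_sum fun k _ => step k).trans ?_
    rw [← Finset.mul_sum, Finset.sum_range_sub (fun k => Ψ (F (k + k0)))]
    have := hB (F (N + k0)) ⟨hk0 _ (by omega), hlt _⟩
    exact mul_le_mul_of_nonneg_left (by linarith) (by positivity)

end JG

/-- Global convergence of the Jacobi-G algorithm on O(n) for the simultaneous approximate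
diagonalization cost of symmetric third-order tensors: for any starting point, the Jacobi-G
iterates converge to a single limit point, which is a stationary point of `f` on O(n). -/
theorem jacobiG_global_convergence_order3 {n L : ℕ}
    (A : Fin L → Fin n → Fin n → Fin n → ℝ)
    (hsym : ∀ ℓ a b c, A ℓ a b c = A ℓ b a c ∧ A ℓ a b c = A ℓ a c b)
    (f : Matrix (Fin n) (Fin n) ℝ → ℝ)
    (hf : ∀ Q : Matrix (Fin n) (Fin n) ℝ, f Q =
      ∑ ℓ, ∑ k, (∑ a, ∑ b, ∑ c, A ℓ a b c * Q a k * Q b k * Q c k) ^ 2)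
    (g : Matrix (Fin n) (Fin n) ℝ → Matrix (Fin n) (Fin n) ℝ)
    (hg : IsGradR f g)
    (δ : ℝ) (hδ0 : 0 < δ) (hδn : δ < 2 / (n : ℝ))
    (Q : ℕ → Matrix (Fin n) (Fin n) ℝ) (hQ0 : (Q 0)ᵀ * Q 0 = 1)
    (i j : ℕ → Fin n) (θ : ℕ → ℝ)
    (hij : ∀ k, i k < j k)
    (hupd : ∀ k, Q (k + 1) = Q k * givensR n (i k) (j k) (θ k))
    (hpair : ∀ k, δ * frobR (projGradR g (Q k)) ≤
      |deriv (fun t : ℝ => f (Q k * givensR n (i k) (j k) t)) 0|)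
    (hmax : ∀ k t, f (Q k * givensR n (i k) (j k) t) ≤ f (Q (k + 1)))
    (hminabs : ∀ k t, (∀ s, f (Q k * givensR n (i k) (j k) s) ≤
        f (Q k * givensR n (i k) (j k) t)) → |θ k| ≤ |t|) :
    ∃ Qs : Matrix (Fin n) (Fin n) ℝ, Qsᵀ * Qs = 1 ∧
      Tendsto (fun k => frobR (Q k - Qs)) atTop (nhds 0) ∧
      projGradR g Qs = 0 := by
  classical
  have hne : ∀ k, i k ≠ j k := fun k => (hij k).ne
  have hp := JG.f_poly A f hf
  obtain ⟨hgp, K, hK, hlip⟩ := JG.grad_lip f hp g hg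
  have hNp := (JG.PM.proj hgp).sumsq
  have horth : ∀ k, (Q k)ᵀ * Q k = 1 := by
    intro k
    induction k with
    | zero => exact hQ0
    | succ k ih =>
      rw [hupd, Matrix.transpose_mul, Matrix.mul_assoc, ← Matrix.mul_assoc _ (Q k), ih,
        Matrix.one_mul, JG.givens_orth (hne k)]
  have hW : ∀ k, JG.Worth (JG.toV (Q k)) = 0 := fun k => (JG.Worth_iff _).2 (horth k)
  have hstep : ∀ k, |deriv (fun t : ℝ => f (Q k * givensR n (i k) (j k) t)) 0| * |θ k| ≤
        2 * (f (Q (k + 1)) - f (Q k)) ∧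
      (deriv (fun t : ℝ => f (Q k * givensR n (i k) (j k) t)) 0) ^ 2 ≤
        16 * f (Q (k + 1)) * (f (Q (k + 1)) - f (Q k)) := by
    intro k
    obtain ⟨A0, α, β, h⟩ := JG.step_form A f hf (Q k) (hne k)
    have := JG.trig_step (h := fun t => f (Q k * givensR n (i k) (j k) t)) (θ := θ k) h
      (fun t => by
        show 0 ≤ f _
        rw [hf]
        exact Finset.sum_nonneg fun _ _ => Finset.sum_nonneg fun _ _ => sq_nonneg _)
      (fun t => by
        show f _ ≤ f (Q k * givensR n (i k) (j k) (θ k))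
        rw [← hupd]; exact hmax k t) (hminabs k)
    simp only [← hupd, JG.givens_zero (hne k)] at this
    exact this
  have hmonoF : Monotone (fun k => f (Q k)) := monotone_nat_of_le_succ fun k => by
    have := hmax k 0
    rwa [JG.givens_zero (hne k)] at this
  obtain ⟨C, hC, hCb⟩ := hp.bdd 1
  have hbdd : BddAbove (Set.range fun k => f (Q k)) := by
    refine ⟨C, ?_⟩
    rintro _ ⟨k, rfl⟩
    exact (le_abs_self _).trans (hCb (JG.toV (Q k)) fun l => JG.orth_entry (horth k) l.1 l.2)
  set c := ⨆ k, f (Q k) with hcdef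
  have hc : Tendsto (fun k => f (Q k)) atTop (nhds c) := tendsto_atTop_ciSup hmonoF hbdd
  obtain ⟨a, hac, Ψ, B, hΨ, hB, hkl⟩ := JG.kl hp hNp JG.Worth_poly JG.Worth_compact hK hlip c
  have hθ0 : ∀ k, f (Q (k + 1)) ≤ f (Q k) → θ k = 0 := by
    intro k hk
    have := hminabs k 0 (fun s => by
      rw [JG.givens_zero (hne k)]; exact (hmax k s).trans hk)
    rw [abs_zero] at this
    exact abs_nonpos_iff.1 this
  have hsum : Summable (fun k => |θ k|) :=
    JG.summable_steps (F := fun k => f (Q k)) (P := fun k => frobR (projGradR g (Q k))) hδ0 hmonoF hc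
      (fun k => Real.sqrt_nonneg _) hpair (fun k => (hstep k).1) hθ0 hac hΨ hB
      (fun k h1 h2 => hkl (JG.toV (Q k)) (f (Q (k + 1))) (hW k) h1 (hmonoF (Nat.le_succ k)) h2)
  have hlim : ∀ u v, ∃ q, Tendsto (fun k => Q k u v) atTop (nhds q) := by
    intro u v
    apply cauchySeq_tendsto_of_complete
    refine cauchySeq_of_dist_le_of_summable (fun k => 2 * |θ k|) (fun k => ?_) (hsum.mul_left 2)
    rw [dist_comm, Real.dist_eq]
    show |Q (k + 1) u v - Q k u v| ≤ _
    rw [hupd]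
    exact JG.givens_move (horth k) (hne k) _ u v
  choose q hq using hlim
  let Qs : Matrix (Fin n) (Fin n) ℝ := fun u v => q u v
  have hvec : Tendsto (fun k => JG.toV (Q k)) atTop (nhds (JG.toV Qs)) :=
    tendsto_pi_nhds.2 fun l => hq l.1 l.2
  refine ⟨Qs, ?_, ?_, ?_⟩
  · have h1 := (JG.Worth_poly.continuous.tendsto (JG.toV Qs)).comp hvec
    have h2 : Tendsto (fun _ : ℕ => (0 : ℝ)) atTop (nhds (JG.Worth (JG.toV Qs))) :=
      h1.congr fun k => hW k
    exact (JG.Worth_iff _).1 (tendsto_nhds_unique h2 tendsto_const_nhds)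
  · have : Tendsto (fun k => Real.sqrt (∑ u, ∑ v, ((Q k - Qs) u v) ^ 2)) atTop
        (nhds (Real.sqrt (∑ u : Fin n, ∑ v : Fin n, (q u v - q u v) ^ 2))) := by
      refine (Real.continuous_sqrt.tendsto _).comp ?_
      refine tendsto_finsetSum _ fun u _ => tendsto_finsetSum _ fun v _ => ?_
      exact ((hq u v).sub_const (q u v)).pow 2
    simpa [frobR] using this
  · apply JG.sumsq_zero
    have h1 := (hNp.continuous.tendsto (JG.toV Qs)).comp hvec
    have hinc : Tendsto (fun k => 16 * f (Q (k + 1)) * (f (Q (k + 1)) - f (Q k))) atTop (nhds 0) := by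
      have hc1 := (tendsto_add_atTop_iff_nat 1).2 hc
      have := (hc1.const_mul 16).mul (hc1.sub hc)
      simpa using this
    have h2 : Tendsto (fun k => ∑ u, ∑ v, (projGradR g (Q k) u v) ^ 2) atTop (nhds 0) := by
      have h3 : Tendsto (fun k => (1 / δ ^ 2) * (16 * f (Q (k + 1)) * (f (Q (k + 1)) - f (Q k))))
          atTop (nhds 0) := by
        have h9 := hinc.const_mul (1 / δ ^ 2)
        rwa [mul_zero] at h9
      refine squeeze_zero (fun k => Finset.sum_nonneg fun _ _ => Finset.sum_nonneg fun _ _ =>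
        sq_nonneg _) (fun k => ?_) h3
      have h4 := hpair k
      have h5 := (hstep k).2
      rw [← sq_abs] at h5
      have h6 : frobR (projGradR g (Q k)) ^ 2 = ∑ u, ∑ v, (projGradR g (Q k) u v) ^ 2 :=
        Real.sq_sqrt (Finset.sum_nonneg fun _ _ => Finset.sum_nonneg fun _ _ => sq_nonneg _)
      have h7 : 0 ≤ frobR (projGradR g (Q k)) := Real.sqrt_nonneg _
      have h8 : (δ * frobR (projGradR g (Q k))) ^ 2 ≤ _ := pow_le_pow_left₀ (by positivity) h4 2
      rw [mul_pow, h6] at h8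
      rw [one_div, inv_mul_eq_div, le_div_iff₀ (by positivity), mul_comm]
      exact h8.trans h5
    exact tendsto_nhds_unique h1 h2
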